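/- arXiv:1312.4065 — 6 statements merged into one kernel-verified Lean document; each statement's English description precedes it below -/
import Mathlib

section
/- Let q ∈ L^∞([0,1]) be a bounded measurable complex-valued function. Suppose there exist constants C, C̃ > 0 and a sequence of complex numbers (q_k)_{k≥0} such that |q_k| ≤ C̃^{k+1} k^k for all k ≥ 0 (with 0^0 := 1), and such that for all τ > 0 one has |Lq(τ) − Σ_{k=0}^{⌊τ/C⌋} q_k τ^{−(k+1)}| ≤ e^{−τ/C̃}. Then q is analytic in a neighborhood of t = 0: there exists ε > 0 such that the power series Σ_{k=0}^∞ (q_k/k!) t^k converges absolutely for |t| < ε and q(t) = Σ_{k=0}^∞ (q_k/k!) t^k for almost every t ∈ [0, ε). -/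
open MeasureTheory

/-!
A Borel–Laplace argument. Comparing the expansion on the two sides of the jump of `⌊τ / C⌋` at
`τ = C k` shows that the `k`-th term is exponentially small there. Hence `‖a k‖ ≤ A R ^ k k!`, so
`B(t) = ∑ t ^ k / k! • a k` converges near `0`, and truncating the expansion at `⌊τ / D⌋` instead of
`⌊τ / C⌋`, with `D ≥ C`, costs only an exponentially small error. For `D` large the terms kept are,
up to exponentially small errors, those of the Laplace transform of `B` over a short interval
`[0, ε]`. The Laplace transform of `q - B` over `[0, ε]` is therefore `O(exp (-c τ))`, and this
forces `q - B` to vanish a.e. on `[0, min ε c)`.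
-/

open Filter Asymptotics Topology Set

section ExponentiallySmall

variable {E : Type*} [NormedAddCommGroup E]

/-- `F τ = O(exp (-c τ))` as `τ → ∞`, for some rate `c > 0`. -/
def IsExpSmall (F : ℝ → E) : Prop :=
  ∃ c > 0, F =O[atTop] fun τ : ℝ => Real.exp (-c * τ)

lemma isBigO_exp_neg_mul_of_le {c d : ℝ} (hcd : c ≤ d) :
    (fun τ : ℝ => Real.exp (-d * τ)) =O[atTop] fun τ => Real.exp (-c * τ) := by
  refine IsBigO.of_bound 1 ?_
  filter_upwards [eventually_ge_atTop 0] with τ hτ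
  rw [one_mul, Real.norm_eq_abs, Real.norm_eq_abs, Real.abs_exp, Real.abs_exp, Real.exp_le_exp]
  nlinarith

lemma isBigO_exp_of_norm_le {F : ℝ → E} {K c : ℝ}
    (h : ∀ᶠ τ in atTop, ‖F τ‖ ≤ K * Real.exp (-c * τ)) :
    F =O[atTop] fun τ => Real.exp (-c * τ) :=
  IsBigO.of_bound K <| by simpa only [Real.norm_eq_abs, Real.abs_exp] using h

lemma exists_norm_le_of_isBigO_exp {F : ℝ → E} {c : ℝ}
    (h : F =O[atTop] fun τ => Real.exp (-c * τ)) :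
    ∃ K, ∀ᶠ τ in atTop, ‖F τ‖ ≤ K * Real.exp (-c * τ) := by
  obtain ⟨K, hK⟩ := h.bound
  exact ⟨K, by simpa only [Real.norm_eq_abs, Real.abs_exp] using hK⟩

lemma IsExpSmall.of_norm_le {F : ℝ → E} {K c : ℝ} (hc : 0 < c)
    (h : ∀ᶠ τ in atTop, ‖F τ‖ ≤ K * Real.exp (-c * τ)) : IsExpSmall F :=
  ⟨c, hc, isBigO_exp_of_norm_le h⟩

lemma IsExpSmall.add {F G : ℝ → E} (hF : IsExpSmall F) (hG : IsExpSmall G) :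
    IsExpSmall fun τ => F τ + G τ := by
  obtain ⟨c, hc, hF⟩ := hF
  obtain ⟨d, hd, hG⟩ := hG
  exact ⟨min c d, lt_min hc hd, (hF.trans (isBigO_exp_neg_mul_of_le (min_le_left c d))).add
    (hG.trans (isBigO_exp_neg_mul_of_le (min_le_right c d)))⟩

lemma exp_neg_pow_floor_div_succ_le {s : ℝ} (hs : 0 ≤ s) (D τ : ℝ) :
    Real.exp (-s) ^ (⌊τ / D⌋₊ + 1) ≤ Real.exp (-(s / D) * τ) := by
  rw [← Real.exp_nat_mul, Real.exp_le_exp]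
  have h := mul_le_mul_of_nonneg_right (Nat.lt_floor_add_one (τ / D)).le hs
  push_cast
  calc ((⌊τ / D⌋₊ : ℝ) + 1) * -s = -(((⌊τ / D⌋₊ : ℝ) + 1) * s) := by ring
    _ ≤ -(τ / D * s) := neg_le_neg h
    _ = -(s / D) * τ := by ring

end ExponentiallySmall

section FactorialGrowth

variable {E : Type*} [NormedAddCommGroup E] {C : ℝ}

lemma mul_natCast_pow_succ_le (hC : 0 ≤ C) (k : ℕ) :
    (C * k) ^ (k + 1) ≤ C * ((C * Real.exp 2) ^ k * k.factorial) := by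
  have hpow : (k : ℝ) ^ k ≤ Real.exp k * k.factorial :=
    (div_le_iff₀ (by positivity)).1 (Real.pow_div_factorial_le_exp _ k.cast_nonneg k)
  have hlin : (k : ℝ) ≤ Real.exp k := by linarith [Real.add_one_le_exp (k : ℝ)]
  calc (C * k) ^ (k + 1) = C ^ (k + 1) * ((k : ℝ) ^ k * k) := by ring
    _ ≤ C ^ (k + 1) * (Real.exp k * k.factorial * Real.exp k) := by gcongr
    _ = C * ((C * Real.exp 2) ^ k * k.factorial) := by
        rw [mul_pow, ← Real.exp_nat_mul, mul_two, Real.exp_add]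
        ring

lemma exists_norm_le_mul_pow_mul_factorial {a : ℕ → E} (hC : 0 < C) {c : ℝ} (hc : 0 ≤ c)
    (ha : a =O[atTop] fun k : ℕ => (C * k) ^ (k + 1) * Real.exp (-c * (C * k))) :
    ∃ A > 0, ∃ R > 0, ∀ k, ‖a k‖ ≤ A * R ^ k * k.factorial := by
  have hle : (fun k : ℕ => (C * k) ^ (k + 1) * Real.exp (-c * (C * k))) =O[atTop]
      fun k : ℕ => (C * Real.exp 2) ^ k * (k.factorial : ℝ) := by
    refine .of_bound C (.of_forall fun k => ?_)
    rw [Real.norm_of_nonneg (by positivity), Real.norm_of_nonneg (by positivity)]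
    refine (mul_le_of_le_one_right (by positivity) (Real.exp_le_one_iff.2 ?_)).trans
      (mul_natCast_pow_succ_le hC.le k)
    rw [neg_mul, neg_nonpos]
    positivity
  obtain ⟨A, hA, hbound⟩ := bound_of_isBigO_nat_atTop (ha.trans hle)
  refine ⟨A, hA, C * Real.exp 2, by positivity, fun k => ?_⟩
  have h := hbound (x := k) (by positivity)
  rwa [Real.norm_of_nonneg (by positivity), ← mul_assoc] at h

end FactorialGrowth

section FloorJump

variable {E : Type*} [NormedAddCommGroup E]

lemma eventually_floor_div_add_one_eq {C : ℝ} (hC : 0 < C) {k : ℕ} (hk : 0 < k) :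
    ∀ᶠ τ in 𝓝[<] (C * k), ⌊τ / C⌋₊ + 1 = k := by
  obtain ⟨n, rfl⟩ := Nat.exists_eq_succ_of_ne_zero hk.ne'
  have hlt : C * n < C * (n.succ : ℝ) := by
    gcongr
    exact n.lt_succ_self
  filter_upwards [Ioo_mem_nhdsLT hlt] with τ hτ
  have hτ₀ : 0 ≤ τ := le_trans (by positivity) hτ.1.le
  rw [Nat.succ_eq_add_one, Nat.add_right_cancel_iff, Nat.floor_eq_iff (by positivity),
    le_div_iff₀' hC, div_lt_iff₀' hC]
  exact ⟨hτ.1.le, by simpa using hτ.2⟩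

lemma norm_le_two_mul_of_norm_sub_sum_range_floor_le {F : ℝ → E} {g : ℕ → ℝ → E} {B : ℝ → ℝ}
    {C : ℝ} (hC : 0 < C) {k : ℕ} (hk : 0 < k) (hF : ContinuousAt F (C * k))
    (hg : ∀ j < k, ContinuousAt (g j) (C * k)) (hB : ContinuousAt B (C * k))
    (h : ∀ᶠ τ in 𝓝 (C * k), ‖F τ - ∑ j ∈ Finset.range (⌊τ / C⌋₊ + 1), g j τ‖ ≤ B τ) :
    ‖g k (C * k)‖ ≤ 2 * B (C * k) := by
  have hcont : ContinuousAt (fun τ => F τ - ∑ j ∈ Finset.range k, g j τ) (C * k) :=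
    hF.sub (tendsto_finsetSum _ fun j hj => hg j (Finset.mem_range.1 hj))
  have hleft : ‖F (C * k) - ∑ j ∈ Finset.range k, g j (C * k)‖ ≤ B (C * k) := by
    refine le_of_tendsto_of_tendsto (b := 𝓝[<] (C * k))
      (hcont.norm.tendsto.mono_left nhdsWithin_le_nhds)
      (hB.tendsto.mono_left nhdsWithin_le_nhds) ?_
    filter_upwards [eventually_floor_div_add_one_eq hC hk, h.filter_mono nhdsWithin_le_nhds]
      with τ hfloor hτ
    rwa [hfloor] at hτ
  have hat : ‖F (C * k) - ∑ j ∈ Finset.range (k + 1), g j (C * k)‖ ≤ B (C * k) := by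
    simpa only [mul_div_cancel_left₀ _ hC.ne', Nat.floor_natCast] using h.self_of_nhds
  calc ‖g k (C * k)‖
      = ‖(F (C * k) - ∑ j ∈ Finset.range k, g j (C * k)) -
          (F (C * k) - ∑ j ∈ Finset.range (k + 1), g j (C * k))‖ := by
        rw [Finset.sum_range_succ, sub_sub_sub_cancel_left, add_sub_cancel_left]
    _ ≤ B (C * k) + B (C * k) := norm_sub_le_of_le hleft hat
    _ = 2 * B (C * k) := by ring

end FloorJump

variable {E : Type*} [NormedAddCommGroup E] [NormedSpace ℝ E]

section TruncatedLaplace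

/-- The Laplace transform of `f` over the interval `[0, b]`, at a real argument `τ`. -/
noncomputable def truncatedLaplace (b : ℝ) (f : ℝ → E) (τ : ℝ) : E :=
  ∫ t in (0 : ℝ)..b, Real.exp (-(t * τ)) • f t

lemma exp_neg_mul_le_one {t τ : ℝ} (ht : 0 ≤ t) (hτ : 0 ≤ τ) : Real.exp (-(t * τ)) ≤ 1 :=
  Real.exp_le_one_iff.2 (neg_nonpos.2 (mul_nonneg ht hτ))

lemma intervalIntegrable_exp_smul {f : ℝ → E} {u v : ℝ}
    (hf : IntervalIntegrable f volume u v) (τ : ℝ) :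
    IntervalIntegrable (fun t => Real.exp (-(t * τ)) • f t) volume u v :=
  hf.continuousOn_smul (by fun_prop)

lemma truncatedLaplace_sub {f g : ℝ → E} {b : ℝ} (hf : IntervalIntegrable f volume 0 b)
    (hg : IntervalIntegrable g volume 0 b) (τ : ℝ) :
    truncatedLaplace b (fun t => f t - g t) τ =
      truncatedLaplace b f τ - truncatedLaplace b g τ := by
  simp only [truncatedLaplace, smul_sub]
  exact intervalIntegral.integral_sub (intervalIntegrable_exp_smul hf τ)
    (intervalIntegrable_exp_smul hg τ)

lemma norm_truncatedLaplace_le {f : ℝ → E} {b M τ : ℝ} (hb : 0 ≤ b) (hτ : 0 ≤ τ)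
    (hf : ∀ t ∈ Ioc 0 b, ‖f t‖ ≤ M) : ‖truncatedLaplace b f τ‖ ≤ M * b := by
  have hbound : ∀ t ∈ uIoc 0 b, ‖Real.exp (-(t * τ)) • f t‖ ≤ M := by
    intro t ht
    rw [uIoc_of_le hb] at ht
    rw [norm_smul, Real.norm_eq_abs, Real.abs_exp]
    exact (mul_le_of_le_one_left (norm_nonneg _) (exp_neg_mul_le_one ht.1.le hτ)).trans (hf t ht)
  simpa [truncatedLaplace, abs_of_nonneg hb] using
    intervalIntegral.norm_integral_le_of_norm_le_const hbound

lemma continuousAt_truncatedLaplace {f : ℝ → E} {b τ₀ : ℝ} (hb : 0 ≤ b)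
    (hf : IntervalIntegrable f volume 0 b) (hτ₀ : 0 < τ₀) :
    ContinuousAt (truncatedLaplace b f) τ₀ := by
  refine intervalIntegral.continuousAt_of_dominated_interval (bound := fun t => ‖f t‖)
    (.of_forall fun τ => (intervalIntegrable_exp_smul hf τ).def'.aestronglyMeasurable) ?_ hf.norm
    (.of_forall fun t _ => by fun_prop)
  filter_upwards [lt_mem_nhds hτ₀] with τ hτ
  refine .of_forall fun t ht => ?_
  rw [uIoc_of_le hb] at ht
  rw [norm_smul, Real.norm_eq_abs, Real.abs_exp]
  exact mul_le_of_le_one_left (norm_nonneg _) (exp_neg_mul_le_one ht.1.le hτ.le)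

lemma isExpSmall_truncatedLaplace_sub {f : ℝ → E} {ε b : ℝ} (hε : 0 < ε) (hεb : ε ≤ b)
    (hf : IntervalIntegrable f volume 0 b) :
    IsExpSmall fun τ => truncatedLaplace ε f τ - truncatedLaplace b f τ := by
  have hf₀ : IntervalIntegrable f volume 0 ε := hf.mono_set <| by
    rw [uIcc_of_le hε.le, uIcc_of_le (hε.le.trans hεb)]; exact Icc_subset_Icc_right hεb
  have hf₁ : IntervalIntegrable f volume ε b := hf₀.symm.trans hf
  refine .of_norm_le (K := ∫ t in ε..b, ‖f t‖) hε ?_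
  filter_upwards [eventually_ge_atTop 0] with τ hτ
  rw [norm_sub_rev, truncatedLaplace, truncatedLaplace,
    intervalIntegral.integral_interval_sub_left (intervalIntegrable_exp_smul hf τ)
      (intervalIntegrable_exp_smul hf₀ τ),
    ← intervalIntegral.integral_mul_const]
  refine intervalIntegral.norm_integral_le_of_norm_le hεb (.of_forall fun t ht => ?_)
    (hf₁.norm.mul_const _)
  rw [norm_smul, Real.norm_eq_abs, Real.abs_exp, mul_comm]
  gcongr
  nlinarith [ht.1]

end TruncatedLaplace

section Uniqueness

/-- The Gompertz function `u ↦ 1 - exp (-exp (s u))`. As `s → ∞` it tends to the indicator of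
`u > 0`, while its expansion in powers of `exp (s u)` makes its integral against `f` a series in the
values of the Laplace transform of `f` at multiples of `s`. -/
noncomputable def gompertz (s u : ℝ) : ℝ := 1 - Real.exp (-Real.exp (s * u))

lemma hasSum_pow_succ_div_factorial (y : ℝ) :
    HasSum (fun k : ℕ => y ^ (k + 1) / ((k + 1).factorial : ℝ)) (Real.exp y - 1) := by
  have h := NormedSpace.expSeries_div_hasSum_exp (𝔸 := ℝ) y
  rw [← Real.exp_eq_exp_ℝ] at h
  rw [hasSum_nat_add_iff (f := fun k : ℕ => y ^ k / (k.factorial : ℝ)) 1]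
  simpa using h

lemma hasSum_gompertz (s u : ℝ) :
    HasSum (fun k : ℕ => -((-Real.exp (s * u)) ^ (k + 1) / ((k + 1).factorial : ℝ)))
      (gompertz s u) := by
  simpa [gompertz] using (hasSum_pow_succ_div_factorial (-Real.exp (s * u))).neg

lemma abs_gompertz_le_one (s u : ℝ) : |gompertz s u| ≤ 1 := by
  have h_pos := Real.exp_pos (-Real.exp (s * u))
  have h_le : Real.exp (-Real.exp (s * u)) ≤ 1 :=
    Real.exp_le_one_iff.2 (neg_nonpos.2 (Real.exp_pos _).le)
  rw [gompertz, abs_le]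
  constructor <;> linarith

lemma tendsto_gompertz_of_pos {u : ℝ} (hu : 0 < u) :
    Tendsto (fun s => gompertz s u) atTop (𝓝 1) := by
  have h : Tendsto (fun s => Real.exp (s * u)) atTop atTop :=
    Real.tendsto_exp_atTop.comp (tendsto_id.atTop_mul_const hu)
  simpa [gompertz] using (Real.tendsto_exp_neg_atTop_nhds_zero.comp h).const_sub 1

lemma tendsto_gompertz_of_neg {u : ℝ} (hu : u < 0) :
    Tendsto (fun s => gompertz s u) atTop (𝓝 0) := by
  have h : Tendsto (fun s => Real.exp (s * u)) atTop (𝓝 0) :=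
    Real.tendsto_exp_atBot.comp (tendsto_id.atTop_mul_const_of_neg hu)
  simpa [gompertz] using ((Real.continuous_exp.tendsto _).comp h.neg).const_sub 1

variable {f : ℝ → E} {b : ℝ}

lemma exp_mul_sub_pow_succ (s x t : ℝ) (k : ℕ) :
    Real.exp (s * (x - t)) ^ (k + 1) =
      Real.exp (s * x) ^ (k + 1) * Real.exp (-(t * ((k + 1) * s))) := by
  rw [← Real.exp_nat_mul, ← Real.exp_nat_mul, ← Real.exp_add]
  push_cast
  ring_nf

lemma hasSum_truncatedLaplace_integral_gompertz_smul (hb : 0 ≤ b)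
    (hf : IntervalIntegrable f volume 0 b) {s : ℝ} (hs : 0 ≤ s) (x : ℝ) :
    HasSum (fun k : ℕ => (-((-Real.exp (s * x)) ^ (k + 1) / ((k + 1).factorial : ℝ))) •
        truncatedLaplace b f ((k + 1) * s))
      (∫ t in (0 : ℝ)..b, gompertz s (x - t) • f t) := by
  have hterm (k : ℕ) (t : ℝ) :
      (-((-Real.exp (s * (x - t))) ^ (k + 1) / ((k + 1).factorial : ℝ))) • f t =
        (-((-Real.exp (s * x)) ^ (k + 1) / ((k + 1).factorial : ℝ))) •
          Real.exp (-(t * ((k + 1) * s))) • f t := by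
    rw [smul_smul, neg_pow, exp_mul_sub_pow_succ, neg_pow (Real.exp (s * x))]
    ring_nf
  have hsummable : Summable fun k : ℕ => Real.exp (s * x) ^ (k + 1) / ((k + 1).factorial : ℝ) :=
    (hasSum_pow_succ_div_factorial (Real.exp (s * x))).summable
  have hmeas (k : ℕ) : AEStronglyMeasurable
      (fun t => (-((-Real.exp (s * (x - t))) ^ (k + 1) / ((k + 1).factorial : ℝ))) • f t)
      (volume.restrict (uIoc 0 b)) :=
    (hf.continuousOn_smul (by fun_prop)).def'.aestronglyMeasurable
  have hbound (k : ℕ) (t : ℝ) (ht : t ∈ uIoc 0 b) :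
      ‖(-((-Real.exp (s * (x - t))) ^ (k + 1) / ((k + 1).factorial : ℝ))) • f t‖ ≤
        Real.exp (s * x) ^ (k + 1) / ((k + 1).factorial : ℝ) * ‖f t‖ := by
    rw [uIoc_of_le hb] at ht
    rw [norm_smul, norm_neg, norm_div, norm_pow, norm_neg, Real.norm_natCast, Real.norm_eq_abs,
      Real.abs_exp]
    gcongr
    linarith [ht.1]
  have hint : IntervalIntegrable
      (fun t => ∑' k : ℕ, Real.exp (s * x) ^ (k + 1) / ((k + 1).factorial : ℝ) * ‖f t‖)
      volume 0 b := by
    simpa only [tsum_mul_right] using hf.norm.const_mul _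
  have hsum := intervalIntegral.hasSum_integral_of_dominated_convergence _ hmeas
    (fun k => .of_forall (hbound k)) (.of_forall fun t _ => hsummable.mul_right ‖f t‖) hint
    (.of_forall fun t _ => (hasSum_gompertz s (x - t)).smul_const (f t))
  simpa only [hterm, intervalIntegral.integral_smul, truncatedLaplace] using hsum

lemma norm_integral_gompertz_smul_le (hb : 0 ≤ b) (hf : IntervalIntegrable f volume 0 b)
    {K c s : ℝ} (hs : 0 ≤ s)
    (hL : ∀ τ, s ≤ τ → ‖truncatedLaplace b f τ‖ ≤ K * Real.exp (-c * τ)) (x : ℝ) :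
    ‖∫ t in (0 : ℝ)..b, gompertz s (x - t) • f t‖ ≤
      K * (Real.exp (Real.exp (s * (x - c))) - 1) := by
  rw [← (hasSum_truncatedLaplace_integral_gompertz_smul hb hf hs x).tsum_eq]
  refine tsum_of_norm_bounded ((hasSum_pow_succ_div_factorial _).mul_left K) fun k => ?_
  rw [norm_smul, norm_neg, norm_div, norm_pow, norm_neg, Real.norm_natCast, Real.norm_eq_abs,
    Real.abs_exp, exp_mul_sub_pow_succ, ← neg_mul]
  calc Real.exp (s * x) ^ (k + 1) / ((k + 1).factorial : ℝ) * ‖truncatedLaplace b f ((k + 1) * s)‖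
      ≤ Real.exp (s * x) ^ (k + 1) / ((k + 1).factorial : ℝ) *
          (K * Real.exp (-c * ((k + 1) * s))) := by
        gcongr
        exact hL _ (le_mul_of_one_le_left hs (by linarith [k.cast_nonneg (α := ℝ)]))
    _ = _ := by ring

lemma tendsto_integral_gompertz_smul (hf : IntervalIntegrable f volume 0 b) {x : ℝ}
    (hx : x ∈ Icc 0 b) :
    Tendsto (fun s => ∫ t in (0 : ℝ)..b, gompertz s (x - t) • f t) atTop
      (𝓝 (∫ t in (0 : ℝ)..x, f t)) := by
  rw [← intervalIntegral.integral_indicator hx]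
  refine intervalIntegral.tendsto_integral_filter_of_dominated_convergence (fun t => ‖f t‖)
    (.of_forall fun s => (hf.continuousOn_smul ?_).def'.aestronglyMeasurable)
    (.of_forall fun s => .of_forall fun t _ => ?_) hf.norm ?_
  · unfold gompertz
    fun_prop
  · rw [norm_smul]
    exact mul_le_of_le_one_left (norm_nonneg _) (abs_gompertz_le_one s _)
  · filter_upwards [Measure.ae_ne volume x] with t ht _
    rcases lt_or_gt_of_ne ht with htx | hxt
    · rw [indicator_of_mem (show t ∈ {t | t ≤ x} from htx.le)]
      simpa using (tendsto_gompertz_of_pos (sub_pos.2 htx)).smul_const (f t)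
    · rw [indicator_of_notMem (show t ∉ {t | t ≤ x} from hxt.not_ge)]
      simpa using (tendsto_gompertz_of_neg (sub_neg.2 hxt)).smul_const (f t)

lemma integral_eq_zero_of_truncatedLaplace_isBigO_exp (hf : IntervalIntegrable f volume 0 b) {c : ℝ}
    (hL : truncatedLaplace b f =O[atTop] fun τ => Real.exp (-c * τ)) {x : ℝ} (hx : x ∈ Icc 0 b)
    (hxc : x < c) : ∫ t in (0 : ℝ)..x, f t = 0 := by
  obtain ⟨K, hK⟩ := exists_norm_le_of_isBigO_exp hL
  have hbound : ∀ᶠ s in atTop, ‖∫ t in (0 : ℝ)..b, gompertz s (x - t) • f t‖ ≤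
      K * (Real.exp (Real.exp (s * (x - c))) - 1) := by
    filter_upwards [eventually_forall_ge_atTop.2 hK, eventually_ge_atTop 0] with s hKs hs
    exact norm_integral_gompertz_smul_le (hx.1.trans hx.2) hf hs hKs x
  have hlim : Tendsto (fun s => K * (Real.exp (Real.exp (s * (x - c))) - 1)) atTop (𝓝 0) := by
    have h : Tendsto (fun s => Real.exp (s * (x - c))) atTop (𝓝 0) :=
      Real.tendsto_exp_atBot.comp (tendsto_id.atTop_mul_const_of_neg (sub_neg.2 hxc))
    simpa using (((Real.continuous_exp.tendsto _).comp h).sub_const 1).const_mul K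
  exact tendsto_nhds_unique (tendsto_integral_gompertz_smul hf hx)
    (squeeze_zero_norm' hbound hlim)

theorem ae_eq_zero_of_truncatedLaplace_isBigO_exp [CompleteSpace E]
    (hf : IntervalIntegrable f volume 0 b) {c : ℝ}
    (hL : truncatedLaplace b f =O[atTop] fun τ => Real.exp (-c * τ)) :
    ∀ᵐ t ∂volume.restrict (Ico 0 (min b c)), f t = 0 := by
  rw [ae_restrict_iff' measurableSet_Ico]
  filter_upwards [Measure.ae_ne volume 0, hf.ae_hasDerivAt_integral] with t ht₀ hderiv ht
  obtain ⟨htb, htc⟩ := lt_min_iff.1 ht.2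
  have hb : 0 ≤ b := ht.1.trans htb.le
  have hzero : (fun x => ∫ t in (0 : ℝ)..x, f t) =ᶠ[𝓝 t] fun _ => 0 := by
    filter_upwards [Ioo_mem_nhds (ht.1.lt_of_ne' ht₀) ht.2] with x hx
    obtain ⟨hxb, hxc⟩ := lt_min_iff.1 hx.2
    exact integral_eq_zero_of_truncatedLaplace_isBigO_exp hf hL ⟨hx.1.le, hxb.le⟩ hxc
  rw [uIcc_of_le hb] at hderiv
  exact (hderiv ⟨ht.1, htb.le⟩ 0 ⟨le_rfl, hb⟩).unique
    ((hasDerivAt_const t 0).congr_of_eventuallyEq hzero)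

end Uniqueness

section Coefficients

/-- The partial sum `∑ k < n, τ ^ (-(k + 1)) • a k` of the expansion with coefficients `a`. -/
noncomputable def inversePowerSum (a : ℕ → E) (n : ℕ) (τ : ℝ) : E :=
  ∑ k ∈ Finset.range n, (τ ^ (k + 1))⁻¹ • a k

variable {a : ℕ → E} {C : ℝ}

lemma isBigO_pow_succ_mul_exp_of_isExpSmall_sub_inversePowerSum {F : ℝ → E}
    (hF : ∀ τ > 0, ContinuousAt F τ) (hC : 0 < C)
    (h : IsExpSmall fun τ => F τ - inversePowerSum a (⌊τ / C⌋₊ + 1) τ) :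
    ∃ c > 0, a =O[atTop] fun k : ℕ => (C * k) ^ (k + 1) * Real.exp (-c * (C * k)) := by
  obtain ⟨c, hc, h⟩ := h
  obtain ⟨K, hK⟩ := exists_norm_le_of_isBigO_exp h
  obtain ⟨T, hT⟩ := eventually_atTop.1 hK
  refine ⟨c, hc, .of_bound (2 * K) ?_⟩
  have htendsto : Tendsto (fun k : ℕ => C * (k : ℝ)) atTop atTop :=
    tendsto_natCast_atTop_atTop.const_mul_atTop hC
  filter_upwards [htendsto.eventually_gt_atTop T, eventually_gt_atTop 0] with k hTk hk₀
  have hpos : 0 < C * k := by positivity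
  have hjump : ‖((C * k) ^ (k + 1))⁻¹ • a k‖ ≤ 2 * (K * Real.exp (-c * (C * k))) :=
    norm_le_two_mul_of_norm_sub_sum_range_floor_le (g := fun j τ => (τ ^ (j + 1))⁻¹ • a j)
      (B := fun τ => K * Real.exp (-c * τ)) hC hk₀ (hF _ hpos)
      (fun j _ => ((continuousAt_id.pow _).inv₀ (pow_pos hpos _).ne').smul continuousAt_const)
      (by fun_prop) ((lt_mem_nhds hTk).mono fun τ hτ => hT τ hτ.le)
  rw [norm_smul, norm_inv, Real.norm_of_nonneg (by positivity), inv_mul_le_iff₀ (by positivity)]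
    at hjump
  rw [Real.norm_of_nonneg (by positivity)]
  linarith

lemma isExpSmall_inversePowerSum_sub {D c : ℝ} (hC : 0 < C) (hCD : C ≤ D) (hc : 0 < c)
    (ha : a =O[atTop] fun k : ℕ => (C * k) ^ (k + 1) * Real.exp (-c * (C * k))) :
    IsExpSmall fun τ =>
      inversePowerSum a (⌊τ / C⌋₊ + 1) τ - inversePowerSum a (⌊τ / D⌋₊ + 1) τ := by
  have hD : 0 < D := hC.trans_le hCD
  obtain ⟨K, hK₀, hK⟩ := ha.exists_nonneg
  set ρ := Real.exp (-(c * C)) with hρ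
  have hρ₁ : ρ < 1 := Real.exp_lt_one_iff.2 (neg_lt_zero.2 (mul_pos hc hC))
  have hfloor : Tendsto (fun τ : ℝ => ⌊τ / D⌋₊) atTop atTop :=
    tendsto_nat_floor_atTop.comp (tendsto_id.atTop_div_const hD)
  refine .of_norm_le (K := K / (1 - ρ)) (c := c * C / D) (by positivity) ?_
  filter_upwards [hfloor.eventually (eventually_forall_ge_atTop.2 hK.bound),
    eventually_gt_atTop 0] with τ hbound hτ
  have hterm (k : ℕ) (hk : k ∈ Finset.Ico (⌊τ / D⌋₊ + 1) (⌊τ / C⌋₊ + 1)) :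
      ‖(τ ^ (k + 1))⁻¹ • a k‖ ≤ K * ρ ^ k := by
    rw [Finset.mem_Ico] at hk
    have hkC : C * k ≤ τ :=
      (le_div_iff₀' hC).1 ((Nat.le_floor_iff (by positivity)).1 (Nat.lt_succ_iff.1 hk.2))
    have hak := hbound k (by omega)
    rw [Real.norm_of_nonneg (by positivity)] at hak
    rw [norm_smul, norm_inv, Real.norm_of_nonneg (by positivity), inv_mul_le_iff₀ (by positivity)]
    calc ‖a k‖ ≤ K * ((C * k) ^ (k + 1) * Real.exp (-c * (C * k))) := hak
      _ ≤ K * (τ ^ (k + 1) * Real.exp (-c * (C * k))) := by gcongr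
      _ = τ ^ (k + 1) * (K * ρ ^ k) := by
          rw [hρ, ← Real.exp_nat_mul]
          ring_nf
  have hle : ⌊τ / D⌋₊ + 1 ≤ ⌊τ / C⌋₊ + 1 := by gcongr
  rw [inversePowerSum, inversePowerSum, ← Finset.sum_Ico_eq_sub _ hle]
  calc ‖∑ k ∈ Finset.Ico (⌊τ / D⌋₊ + 1) (⌊τ / C⌋₊ + 1), (τ ^ (k + 1))⁻¹ • a k‖
      ≤ K * ∑ k ∈ Finset.Ico (⌊τ / D⌋₊ + 1) (⌊τ / C⌋₊ + 1), ρ ^ k := by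
        rw [Finset.mul_sum]
        exact norm_sum_le_of_le _ hterm
    _ ≤ K * (ρ ^ (⌊τ / D⌋₊ + 1) / (1 - ρ)) := by
        gcongr
        exact geom_sum_Ico_le_of_lt_one (Real.exp_pos _).le hρ₁
    _ ≤ K * (Real.exp (-(c * C / D) * τ) / (1 - ρ)) := by
        have : 0 ≤ 1 - ρ := sub_nonneg.2 hρ₁.le
        gcongr
        exact exp_neg_pow_floor_div_succ_le (by positivity) D τ
    _ = K / (1 - ρ) * Real.exp (-(c * C / D) * τ) := by ring

end Coefficients

section Monomials

lemma integral_exp_neg_mul_mul_pow_Ioi (k : ℕ) {τ : ℝ} (hτ : 0 < τ) :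
    ∫ t in Ioi (0 : ℝ), Real.exp (-(t * τ)) * t ^ k = k.factorial / τ ^ (k + 1) := by
  have h := Real.integral_rpow_mul_exp_neg_mul_Ioi (a := k + 1) k.cast_add_one_pos hτ
  rw [Real.Gamma_nat_eq_factorial, ← Nat.cast_add_one, Real.rpow_natCast, one_div, inv_pow,
    inv_mul_eq_div] at h
  simpa [mul_comm] using h

lemma integrableOn_exp_neg_mul_mul_pow_Ioi (k : ℕ) {τ : ℝ} (hτ : 0 < τ) :
    IntegrableOn (fun t => Real.exp (-(t * τ)) * t ^ k) (Ioi 0) := by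
  refine .of_integral_ne_zero ?_
  rw [integral_exp_neg_mul_mul_pow_Ioi k hτ]
  positivity

lemma abs_factorial_div_pow_sub_truncatedLaplace_pow_le (k : ℕ) {ε τ : ℝ} (hε : 0 ≤ ε)
    (hτ : 0 < τ) :
    |k.factorial / τ ^ (k + 1) - truncatedLaplace ε (fun t => t ^ k) τ| ≤
      Real.exp (-(ε / 2) * τ) * (k.factorial / (τ / 2) ^ (k + 1)) := by
  have hint := integrableOn_exp_neg_mul_mul_pow_Ioi k hτ
  have hint₂ := integrableOn_exp_neg_mul_mul_pow_Ioi k (half_pos hτ)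
  have hsub : Ioi ε ⊆ Ioi 0 := Ioi_subset_Ioi hε
  have htail : k.factorial / τ ^ (k + 1) - truncatedLaplace ε (fun t => t ^ k) τ =
      ∫ t in Ioi ε, Real.exp (-(t * τ)) * t ^ k := by
    rw [← integral_exp_neg_mul_mul_pow_Ioi k hτ, truncatedLaplace, sub_eq_iff_eq_add']
    exact (intervalIntegral.integral_interval_add_Ioi hint (hint.mono_set hsub)).symm
  have hpoint : ∀ t ∈ Ioi ε, ‖Real.exp (-(t * τ)) * t ^ k‖ ≤
      Real.exp (-(ε / 2) * τ) * (Real.exp (-(t * (τ / 2))) * t ^ k) := by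
    intro t ht
    have ht₀ : 0 ≤ t := (hsub ht).le
    rw [Real.norm_of_nonneg (by positivity), ← mul_assoc, ← Real.exp_add]
    gcongr
    nlinarith [mem_Ioi.1 ht]
  rw [htail, ← integral_exp_neg_mul_mul_pow_Ioi k (half_pos hτ), ← integral_const_mul,
    ← Real.norm_eq_abs]
  refine (norm_integral_le_of_norm_le ((hint₂.mono_set hsub).const_mul _)
    ((ae_restrict_iff' measurableSet_Ioi).2 (.of_forall hpoint))).trans ?_
  refine setIntegral_mono_set (hint₂.const_mul _) ?_ hsub.eventuallyLE
  refine (ae_restrict_iff' measurableSet_Ioi).2 (.of_forall fun t ht => ?_)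
  have ht₀ : 0 < t := ht
  simp only [Pi.zero_apply]
  positivity

end Monomials

section BorelSum

/-- The Borel sum `∑ t ^ k / k! • a k` of the expansion `∑ τ ^ (-(k + 1)) • a k`. -/
noncomputable def borelSum (a : ℕ → E) (t : ℝ) : E :=
  ∑' k : ℕ, (t ^ k / (k.factorial : ℝ)) • a k

variable {a : ℕ → E} {A R r : ℝ}

lemma norm_pow_div_factorial_smul_le (hA : 0 ≤ A) (hR : 0 ≤ R)
    (ha : ∀ k, ‖a k‖ ≤ A * R ^ k * k.factorial) {t : ℝ} (ht : R * |t| ≤ r) (k : ℕ) :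
    ‖(t ^ k / (k.factorial : ℝ)) • a k‖ ≤ A * r ^ k := by
  rw [norm_smul, norm_div, norm_pow, Real.norm_natCast, Real.norm_eq_abs]
  calc |t| ^ k / k.factorial * ‖a k‖
      ≤ |t| ^ k / k.factorial * (A * R ^ k * k.factorial) := by
        gcongr
        exact ha k
    _ = A * (R * |t|) ^ k := by
        rw [mul_pow]
        field_simp
    _ ≤ A * r ^ k := by gcongr

lemma summable_norm_pow_div_factorial_smul (hA : 0 ≤ A) (hR : 0 ≤ R)
    (ha : ∀ k, ‖a k‖ ≤ A * R ^ k * k.factorial) {t : ℝ} (ht : R * |t| < 1) :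
    Summable fun k : ℕ => ‖(t ^ k / (k.factorial : ℝ)) • a k‖ :=
  .of_nonneg_of_le (fun _ => norm_nonneg _) (norm_pow_div_factorial_smul_le hA hR ha le_rfl)
    ((summable_geometric_of_lt_one (by positivity) ht).mul_left A)

lemma norm_inv_pow_sub_truncatedLaplace_pow_smul_le (hA : 0 ≤ A) (hR : 0 ≤ R)
    (ha : ∀ k, ‖a k‖ ≤ A * R ^ k * k.factorial) {ε τ : ℝ} (hε : 0 ≤ ε) (hτ : 1 ≤ τ) {k : ℕ}
    (hk : 2 * R * k / τ ≤ r) :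
    ‖(τ ^ (k + 1))⁻¹ • a k - (truncatedLaplace ε (fun t => t ^ k) τ / (k.factorial : ℝ)) • a k‖ ≤
      2 * A * Real.exp (-(ε / 2) * τ) * r ^ k := by
  have hτ₀ : 0 < τ := one_pos.trans_le hτ
  have hr₀ : 0 ≤ r := le_trans (by positivity) hk
  have hfact : (k.factorial : ℝ) ≤ (k : ℝ) ^ k := mod_cast k.factorial_le_pow
  have hcoeff : (τ ^ (k + 1))⁻¹ - truncatedLaplace ε (fun t => t ^ k) τ / (k.factorial : ℝ) =
      (k.factorial / τ ^ (k + 1) - truncatedLaplace ε (fun t => t ^ k) τ) / k.factorial := by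
    field_simp
  rw [← sub_smul, hcoeff, norm_smul, norm_div, Real.norm_eq_abs, Real.norm_natCast]
  calc |k.factorial / τ ^ (k + 1) - truncatedLaplace ε (fun t => t ^ k) τ| / k.factorial * ‖a k‖
      ≤ Real.exp (-(ε / 2) * τ) * (k.factorial / (τ / 2) ^ (k + 1)) / k.factorial *
          (A * R ^ k * (k : ℝ) ^ k) := by
        gcongr
        · exact abs_factorial_div_pow_sub_truncatedLaplace_pow_le k hε hτ₀
        · exact (ha k).trans (by gcongr)
    _ = 2 * A * Real.exp (-(ε / 2) * τ) * (2 * R * k / τ) ^ k * τ⁻¹ := by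
        rw [div_pow, div_pow, mul_pow, mul_pow, pow_succ τ, pow_succ 2]
        field_simp
    _ ≤ 2 * A * Real.exp (-(ε / 2) * τ) * r ^ k * 1 := by
        gcongr
        exact inv_le_one_of_one_le₀ hτ
    _ = 2 * A * Real.exp (-(ε / 2) * τ) * r ^ k := mul_one _

lemma isExpSmall_inversePowerSum_sub_sum_truncatedLaplace_pow (hA : 0 ≤ A) (hR : 0 ≤ R)
    (ha : ∀ k, ‖a k‖ ≤ A * R ^ k * k.factorial) {D ε : ℝ} (hD : 0 < D) (hr : r < 1)
    (hRD : 2 * R / D ≤ r) (hε : 0 < ε) :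
    IsExpSmall fun τ => inversePowerSum a (⌊τ / D⌋₊ + 1) τ -
      ∑ k ∈ Finset.range (⌊τ / D⌋₊ + 1),
        (truncatedLaplace ε (fun t => t ^ k) τ / (k.factorial : ℝ)) • a k := by
  have hr₀ : 0 ≤ r := le_trans (by positivity) hRD
  refine .of_norm_le (K := 2 * A / (1 - r)) (half_pos hε) ?_
  filter_upwards [eventually_ge_atTop 1] with τ hτ
  have hτ₀ : 0 < τ := one_pos.trans_le hτ
  have hterm (k : ℕ) (hk : k ∈ Finset.range (⌊τ / D⌋₊ + 1)) : 2 * R * k / τ ≤ r := by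
    have hkτ : (k : ℝ) ≤ τ / D := (Nat.le_floor_iff (div_nonneg hτ₀.le hD.le)).1
      (Nat.lt_succ_iff.1 (Finset.mem_range.1 hk))
    calc 2 * R * k / τ ≤ 2 * R * (τ / D) / τ := by gcongr
      _ = 2 * R / D := by field_simp
      _ ≤ r := hRD
  rw [inversePowerSum, ← Finset.sum_sub_distrib]
  calc ‖∑ k ∈ Finset.range (⌊τ / D⌋₊ + 1), ((τ ^ (k + 1))⁻¹ • a k -
        (truncatedLaplace ε (fun t => t ^ k) τ / (k.factorial : ℝ)) • a k)‖
      ≤ 2 * A * Real.exp (-(ε / 2) * τ) * ∑ k ∈ Finset.range (⌊τ / D⌋₊ + 1), r ^ k := by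
        rw [Finset.mul_sum]
        exact norm_sum_le_of_le _ fun k hk =>
          norm_inv_pow_sub_truncatedLaplace_pow_smul_le hA hR ha hε.le hτ (hterm k hk)
    _ ≤ 2 * A * Real.exp (-(ε / 2) * τ) * (1 / (1 - r)) := by
        gcongr
        simpa only [Nat.Ico_zero_eq_range, pow_zero] using
          geom_sum_Ico_le_of_lt_one (m := 0) (n := ⌊τ / D⌋₊ + 1) hr₀ hr
    _ = 2 * A / (1 - r) * Real.exp (-(ε / 2) * τ) := by ring

variable [CompleteSpace E]

lemma norm_borelSum_sub_sum_range_le (hA : 0 ≤ A) (hR : 0 ≤ R)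
    (ha : ∀ k, ‖a k‖ ≤ A * R ^ k * k.factorial) (hr : r < 1) {t : ℝ} (ht : R * |t| ≤ r) (n : ℕ) :
    ‖borelSum a t - ∑ k ∈ Finset.range n, (t ^ k / (k.factorial : ℝ)) • a k‖ ≤
      A * r ^ n / (1 - r) := by
  rw [norm_sub_rev]
  exact norm_sub_le_of_geometric_bound_of_hasSum hr
    (norm_pow_div_factorial_smul_le hA hR ha ht)
    (summable_norm_pow_div_factorial_smul hA hR ha (ht.trans_lt hr)).of_norm.hasSum n

lemma intervalIntegrable_borelSum (hA : 0 ≤ A) (hR : 0 ≤ R)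
    (ha : ∀ k, ‖a k‖ ≤ A * R ^ k * k.factorial) {ε : ℝ} (hε : 0 ≤ ε) (hRε : R * ε < 1) :
    IntervalIntegrable (borelSum a) volume 0 ε := by
  refine (continuousOn_tsum (fun k => by fun_prop)
    ((summable_geometric_of_lt_one (by positivity) hRε).mul_left A)
    fun k t ht => norm_pow_div_factorial_smul_le hA hR ha ?_ k).intervalIntegrable
  rw [uIcc_of_le hε] at ht
  rw [abs_of_nonneg ht.1]
  exact mul_le_mul_of_nonneg_left ht.2 hR

lemma truncatedLaplace_sum_range (a : ℕ → E) (ε τ : ℝ) (n : ℕ) :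
    truncatedLaplace ε (fun t => ∑ k ∈ Finset.range n, (t ^ k / (k.factorial : ℝ)) • a k) τ =
      ∑ k ∈ Finset.range n,
        (truncatedLaplace ε (fun t => t ^ k) τ / (k.factorial : ℝ)) • a k := by
  simp only [truncatedLaplace, Finset.smul_sum, ← intervalIntegral.integral_div]
  rw [intervalIntegral.integral_finsetSum fun k _ =>
    Continuous.intervalIntegrable (by fun_prop) _ _]
  refine Finset.sum_congr rfl fun k _ => ?_
  rw [← intervalIntegral.integral_smul_const]
  simp only [smul_smul, smul_eq_mul, mul_div_assoc]

lemma norm_truncatedLaplace_borelSum_sub_sum_range_le (hA : 0 ≤ A) (hR : 0 ≤ R)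
    (ha : ∀ k, ‖a k‖ ≤ A * R ^ k * k.factorial) {ε τ : ℝ} (hε : 0 ≤ ε) (hRε : R * ε ≤ r)
    (hr : r < 1) (hτ : 0 ≤ τ) (n : ℕ) :
    ‖truncatedLaplace ε (borelSum a) τ - ∑ k ∈ Finset.range n,
        (truncatedLaplace ε (fun t => t ^ k) τ / (k.factorial : ℝ)) • a k‖ ≤
      A * r ^ n / (1 - r) * ε := by
  rw [← truncatedLaplace_sum_range, ← truncatedLaplace_sub
    (intervalIntegrable_borelSum hA hR ha hε (hRε.trans_lt hr))
    (Continuous.intervalIntegrable (by fun_prop) _ _)]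
  refine norm_truncatedLaplace_le hε hτ fun t ht => norm_borelSum_sub_sum_range_le hA hR ha hr ?_ n
  rw [abs_of_nonneg ht.1.le]
  exact (mul_le_mul_of_nonneg_left ht.2 hR).trans hRε

lemma isExpSmall_inversePowerSum_sub_truncatedLaplace_borelSum (hA : 0 ≤ A) (hR : 0 ≤ R)
    (ha : ∀ k, ‖a k‖ ≤ A * R ^ k * k.factorial) {D ε : ℝ} (hD : 0 < D)
    (hRD : 2 * R / D ≤ Real.exp (-1)) (hε : 0 < ε) (hRε : R * ε ≤ Real.exp (-1)) :
    IsExpSmall fun τ =>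
      inversePowerSum a (⌊τ / D⌋₊ + 1) τ - truncatedLaplace ε (borelSum a) τ := by
  have hexp : Real.exp (-1) < 1 := Real.exp_lt_one_iff.2 neg_one_lt_zero
  have hhead := isExpSmall_inversePowerSum_sub_sum_truncatedLaplace_pow hA hR ha hD hexp hRD hε
  have htail : IsExpSmall fun τ => ∑ k ∈ Finset.range (⌊τ / D⌋₊ + 1),
      (truncatedLaplace ε (fun t => t ^ k) τ / (k.factorial : ℝ)) • a k -
        truncatedLaplace ε (borelSum a) τ := by
    refine .of_norm_le (K := A / (1 - Real.exp (-1)) * ε) (one_div_pos.2 hD) ?_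
    filter_upwards [eventually_ge_atTop 0] with τ hτ
    rw [norm_sub_rev]
    calc ‖truncatedLaplace ε (borelSum a) τ - ∑ k ∈ Finset.range (⌊τ / D⌋₊ + 1),
          (truncatedLaplace ε (fun t => t ^ k) τ / (k.factorial : ℝ)) • a k‖
        ≤ A * Real.exp (-1) ^ (⌊τ / D⌋₊ + 1) / (1 - Real.exp (-1)) * ε :=
          norm_truncatedLaplace_borelSum_sub_sum_range_le hA hR ha hε.le hRε hexp hτ _
      _ ≤ A * Real.exp (-(1 / D) * τ) / (1 - Real.exp (-1)) * ε := by
          have := sub_nonneg.2 hexp.le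
          gcongr
          exact exp_neg_pow_floor_div_succ_le zero_le_one D τ
      _ = A / (1 - Real.exp (-1)) * ε * Real.exp (-(1 / D) * τ) := by ring
  simpa only [sub_add_sub_cancel] using hhead.add htail

end BorelSum

section BorelTheorem

variable [CompleteSpace E]

variable {q : ℝ → E} {a : ℕ → E} {b C : ℝ}

lemma isExpSmall_truncatedLaplace_sub_borelSum (hq : IntervalIntegrable q volume 0 b) (hC : 0 < C)
    (h : IsExpSmall fun τ => truncatedLaplace b q τ - inversePowerSum a (⌊τ / C⌋₊ + 1) τ)
    {A R ε : ℝ} (hA : 0 ≤ A) (hR : 0 ≤ R) (haR : ∀ k, ‖a k‖ ≤ A * R ^ k * k.factorial)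
    (hε : 0 < ε) (hεb : ε ≤ b) (hRε : R * ε ≤ Real.exp (-1)) :
    IsExpSmall fun τ => truncatedLaplace ε q τ - truncatedLaplace ε (borelSum a) τ := by
  obtain ⟨c, hc, ha⟩ := isBigO_pow_succ_mul_exp_of_isExpSmall_sub_inversePowerSum
    (fun τ hτ => continuousAt_truncatedLaplace (hε.le.trans hεb) hq hτ) hC h
  set D := max C (2 * R / Real.exp (-1))
  have hCD : C ≤ D := le_max_left _ _
  have hD : 0 < D := hC.trans_le hCD
  have hRD : 2 * R / D ≤ Real.exp (-1) := by
    rw [div_le_comm₀ hD (Real.exp_pos _)]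
    exact le_max_right _ _
  have hshorten := isExpSmall_truncatedLaplace_sub hε hεb hq
  have htruncate := isExpSmall_inversePowerSum_sub hC hCD hc ha
  have hborel := isExpSmall_inversePowerSum_sub_truncatedLaplace_borelSum hA hR haR hD hRD hε hRε
  simpa only [sub_add_sub_cancel] using ((hshorten.add h).add htruncate).add hborel

theorem stmt_0_general (hb : 0 < b) (hq : IntervalIntegrable q volume 0 b) (hC : 0 < C)
    (h : IsExpSmall fun τ => truncatedLaplace b q τ - inversePowerSum a (⌊τ / C⌋₊ + 1) τ) :
    ∃ ε > 0, (∀ t : ℝ, |t| < ε → Summable fun k : ℕ => ‖(t ^ k / (k.factorial : ℝ)) • a k‖) ∧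
      ∀ᵐ t ∂volume.restrict (Ico 0 ε), q t = ∑' k : ℕ, (t ^ k / (k.factorial : ℝ)) • a k := by
  obtain ⟨c, hc, ha⟩ := isBigO_pow_succ_mul_exp_of_isExpSmall_sub_inversePowerSum
    (fun τ hτ => continuousAt_truncatedLaplace hb.le hq hτ) hC h
  obtain ⟨A, hA, R, hR, haR⟩ := exists_norm_le_mul_pow_mul_factorial hC hc.le ha
  set ε := min b (Real.exp (-1) / R)
  have hεb : ε ≤ b := min_le_left _ _
  have hε : 0 < ε := lt_min hb (by positivity)
  have hRε : R * ε ≤ Real.exp (-1) := (le_div_iff₀' hR).1 (min_le_right _ _)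
  have hRε₁ : R * ε < 1 := hRε.trans_lt (Real.exp_lt_one_iff.2 neg_one_lt_zero)
  have hqε : IntervalIntegrable q volume 0 ε := hq.mono_set <| by
    rw [uIcc_of_le hε.le, uIcc_of_le hb.le]
    exact Icc_subset_Icc_right hεb
  have hBε : IntervalIntegrable (borelSum a) volume 0 ε :=
    intervalIntegrable_borelSum hA.le hR.le haR hε.le hRε₁
  obtain ⟨d, hd, hO⟩ :=
    isExpSmall_truncatedLaplace_sub_borelSum hq hC h hA.le hR.le haR hε hεb hRε
  simp only [← truncatedLaplace_sub hqε hBε] at hO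
  refine ⟨min ε d, lt_min hε hd, fun t ht => ?_, ?_⟩
  · refine summable_norm_pow_div_factorial_smul hA.le hR.le haR (lt_of_le_of_lt ?_ hRε₁)
    gcongr
    exact ht.le.trans (min_le_left _ _)
  · filter_upwards [ae_eq_zero_of_truncatedLaplace_isBigO_exp (hqε.sub hBε) hO] with t ht
    exact sub_eq_zero.1 ht

end BorelTheorem

section Complex

lemma truncatedLaplace_eq_integral_cexp (b : ℝ) (f : ℝ → ℂ) (τ : ℝ) :
    truncatedLaplace b f τ = ∫ t in (0 : ℝ)..b, Complex.exp (-((t : ℂ) * (τ : ℂ))) * f t := by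
  simp [truncatedLaplace]

lemma inversePowerSum_eq_sum_zpow (a : ℕ → ℂ) (n : ℕ) (τ : ℝ) :
    inversePowerSum a n τ = ∑ k ∈ Finset.range n, a k * (τ : ℂ) ^ (-((k : ℤ) + 1)) := by
  refine Finset.sum_congr rfl fun k _ => ?_
  rw [zpow_neg, Complex.real_smul, mul_comm]
  norm_cast

end Complex

/-- If `q ∈ L^∞([0,1])` and its Laplace transform
`Lq(τ) = ∫_0^1 e^{-tτ} q(t) dt` admits, for all real `τ > 0`, the asymptotic expansion
`|Lq(τ) - ∑_{k=0}^{⌊τ/C⌋} q_k τ^{-(k+1)}| ≤ e^{-τ/C̃}` with coefficients satisfying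
`|q_k| ≤ C̃^{k+1} k^k`, then `q` is analytic near `t = 0`: for some `ε > 0` the power
series `∑ (q_k/k!) t^k` converges absolutely for `|t| < ε` and equals `q` a.e. on `[0, ε)`. -/
theorem stmt_0 (q : ℝ → ℂ) (hq_meas : Measurable q) (M : ℝ)
    (hq_bdd : ∀ t ∈ Set.Icc (0:ℝ) 1, ‖q t‖ ≤ M)
    (C Ct : ℝ) (hC : 0 < C) (hCt : 0 < Ct) (qk : ℕ → ℂ)
    (hqk : ∀ k : ℕ, ‖qk k‖ ≤ Ct ^ (k + 1) * (k : ℝ) ^ k)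
    (hL : ∀ τ : ℝ, 0 < τ →
      ‖(∫ t in (0:ℝ)..1, Complex.exp (-((t : ℂ) * (τ : ℂ))) * q t) -
          ∑ k ∈ Finset.range (⌊τ / C⌋₊ + 1), qk k * (τ : ℂ) ^ (-((k : ℤ) + 1))‖
        ≤ Real.exp (-τ / Ct)) :
    ∃ ε > 0,
      (∀ t : ℝ, |t| < ε →
        Summable (fun k : ℕ => ‖qk k / (k.factorial : ℂ) * (t : ℂ) ^ k‖)) ∧
      (∀ᵐ t ∂(volume.restrict (Set.Ico (0:ℝ) ε)),
        q t = ∑' k : ℕ, qk k / (k.factorial : ℂ) * (t : ℂ) ^ k) := by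
  have hq : IntervalIntegrable q volume 0 1 := by
    rw [intervalIntegrable_iff_integrableOn_Icc_of_le zero_le_one]
    exact Measure.integrableOn_of_bounded measure_Icc_lt_top.ne hq_meas.aestronglyMeasurable
      ((ae_restrict_iff' measurableSet_Icc).2 (.of_forall hq_bdd))
  have hsmall : IsExpSmall fun τ =>
      truncatedLaplace 1 q τ - inversePowerSum qk (⌊τ / C⌋₊ + 1) τ := by
    refine .of_norm_le (K := 1) (one_div_pos.2 hCt) ?_
    filter_upwards [eventually_gt_atTop 0] with τ hτ
    rw [truncatedLaplace_eq_integral_cexp, inversePowerSum_eq_sum_zpow, one_mul, neg_mul,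
      one_div_mul_eq_div, ← neg_div]
    exact hL τ hτ
  have hterm (t : ℝ) (k : ℕ) : (t ^ k / (k.factorial : ℝ)) • qk k =
      qk k / (k.factorial : ℂ) * (t : ℂ) ^ k := by
    rw [Complex.real_smul]
    push_cast
    ring
  simpa only [hterm] using stmt_0_general zero_lt_one hq hC hsmall
end

section
/- Let f(x) = x + x·ln(1/x) for 0 < x ≤ 1, with f(0) := 0. For every natural number k, every real λ > 0, and every θ₀ with 0 < θ₀ < 1, if k ≤ θ₀ λ then ∫_λ^∞ e^{−s} (s^k / k!) ds ≤ e^{−λ(1 − f(θ₀))} / (1 − θ₀). -/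
open MeasureTheory

/-!
This is a Chernoff bound. A single term of the exponential series, `(θ s)^k / k! ≤ e^{θ s}`, bounds
the integrand by `θ^{-k} e^{-(1 - θ) s}` for every `θ > 0`; for `θ < 1` the latter integrates over
`(λ, ∞)` to `θ^{-k} e^{-λ (1 - θ)} / (1 - θ)`. Finally `k ≤ θ λ` gives `θ^{-k} ≤ e^{θ λ ln(1/θ)}`,
and the two exponents add up to `-λ (1 - f(θ))`.
-/

section GammaTail

open Real Set

variable {θ : ℝ}

theorem exp_neg_mul_pow_div_factorial_le {s : ℝ} (hθ : 0 < θ) (hs : 0 ≤ s) (k : ℕ) :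
    exp (-s) * s ^ k / (k.factorial : ℝ) ≤ (1 / θ) ^ k * exp ((θ - 1) * s) := by
  have series_term_le : (θ * s) ^ k / (k.factorial : ℝ) ≤ exp (θ * s) :=
    pow_div_factorial_le_exp (θ * s) (by positivity) k
  calc exp (-s) * s ^ k / (k.factorial : ℝ)
      = (1 / θ) ^ k * (exp (-s) * ((θ * s) ^ k / (k.factorial : ℝ))) := by
        rw [mul_pow, one_div_pow]
        field_simp
    _ ≤ (1 / θ) ^ k * (exp (-s) * exp (θ * s)) := by gcongr
    _ = (1 / θ) ^ k * exp ((θ - 1) * s) := by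
        rw [← exp_add]
        ring_nf

theorem integral_Ioi_exp_neg_mul_pow_div_factorial_le {a : ℝ} (ha : 0 ≤ a) (hθ₀ : 0 < θ)
    (hθ₁ : θ < 1) (k : ℕ) :
    ∫ s in Ioi a, exp (-s) * s ^ k / (k.factorial : ℝ) ≤
      (1 / θ) ^ k * (exp (-(a * (1 - θ))) / (1 - θ)) := by
  have hrate : θ - 1 < 0 := sub_neg.mpr hθ₁
  have integrand_nonneg : ∀ s ∈ Ioi a, 0 ≤ exp (-s) * s ^ k / (k.factorial : ℝ) := fun s hs ↦ by
    have : 0 ≤ s := ha.trans (mem_Ioi.mp hs).le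
    positivity
  have integrand_le : ∀ s ∈ Ioi a,
      exp (-s) * s ^ k / (k.factorial : ℝ) ≤ (1 / θ) ^ k * exp ((θ - 1) * s) := fun s hs ↦
    exp_neg_mul_pow_div_factorial_le hθ₀ (ha.trans (mem_Ioi.mp hs).le) k
  calc ∫ s in Ioi a, exp (-s) * s ^ k / (k.factorial : ℝ)
      ≤ ∫ s in Ioi a, (1 / θ) ^ k * exp ((θ - 1) * s) :=
        integral_mono_of_nonneg (ae_restrict_of_forall_mem measurableSet_Ioi integrand_nonneg)
          ((integrableOn_exp_mul_Ioi hrate a).const_mul _)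
          (ae_restrict_of_forall_mem measurableSet_Ioi integrand_le)
    _ = (1 / θ) ^ k * (exp (-(a * (1 - θ))) / (1 - θ)) := by
        rw [integral_const_mul, integral_exp_mul_Ioi hrate, ← neg_sub 1 θ, neg_div_neg_eq,
          neg_mul, mul_comm (1 - θ)]

theorem pow_le_exp_mul_log {x y : ℝ} {k : ℕ} (hx : 1 ≤ x) (hky : (k : ℝ) ≤ y) :
    x ^ k ≤ exp (y * log x) :=
  calc x ^ k = x ^ (k : ℝ) := (rpow_natCast x k).symm
    _ ≤ x ^ y := rpow_le_rpow_of_exponent_le hx hky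
    _ = exp (y * log x) := by rw [rpow_def_of_pos (by positivity), mul_comm]

end GammaTail

/-- With `f(x) = x + x·ln(1/x)` (and `f(0) = 0`, which the formula
gives automatically since `Real.log 0 = 0`), for every `k ∈ ℕ`, `λ > 0`, `0 < θ₀ < 1`
with `k ≤ θ₀ λ`, one has `∫_λ^∞ e^{-s} s^k/k! ds ≤ e^{-λ(1 - f(θ₀))} / (1 - θ₀)`. -/
theorem stmt_3 (f : ℝ → ℝ) (hf : ∀ x : ℝ, f x = x + x * Real.log (1 / x))
    (k : ℕ) (lam : ℝ) (hlam : 0 < lam) (θ₀ : ℝ) (h0 : 0 < θ₀) (h1 : θ₀ < 1)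
    (hk : (k : ℝ) ≤ θ₀ * lam) :
    (∫ s in Set.Ioi lam, Real.exp (-s) * s ^ k / (k.factorial : ℝ))
      ≤ Real.exp (-(lam * (1 - f θ₀))) / (1 - θ₀) := by
  have : 0 < 1 - θ₀ := sub_pos.mpr h1
  calc (∫ s in Set.Ioi lam, Real.exp (-s) * s ^ k / (k.factorial : ℝ))
      ≤ (1 / θ₀) ^ k * (Real.exp (-(lam * (1 - θ₀))) / (1 - θ₀)) :=
        integral_Ioi_exp_neg_mul_pow_div_factorial_le hlam.le h0 h1 k
    _ ≤ Real.exp (θ₀ * lam * Real.log (1 / θ₀)) *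
          (Real.exp (-(lam * (1 - θ₀))) / (1 - θ₀)) := by
        gcongr
        exact pow_le_exp_mul_log (one_le_one_div h0 h1.le) hk
    _ = Real.exp (-(lam * (1 - f θ₀))) / (1 - θ₀) := by
        rw [← mul_div_assoc, ← Real.exp_add, hf]
        ring_nf
end

section
/- Let f(x) = x + x·ln(1/x) for 0 < x ≤ 1, with f(0) := 0. For every θ₀ with 0 < θ₀ < 1, every a > 0, every τ > 0, and every natural number k with k ≤ θ₀ a τ, one has | (τ^{k+1}/k!) ∫_0^a e^{−tτ} t^k dt − 1 | ≤ e^{−aτ(1 − f(θ₀))} / (1 − θ₀). -/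
open MeasureTheory

/-!
With `x = aτ`, the function `-e ^ (-u) ∑_{j ≤ k} uʲ / j!` is a primitive of `e ^ (-u) uᵏ / k!`, so
`(τ ^ (k + 1) / k!) ∫₀ᵃ e ^ (-tτ) tᵏ dt - 1` equals `-e ^ (-x) ∑_{j ≤ k} xʲ / j!`. For `0 < θ ≤ 1`,
compare the truncated exponential series at `x` with the one at `θx` (Rankin's trick): each term is
larger by a factor `θ ^ (-j) ≤ θ ^ (-k)`, so the sum is at most `θ ^ (-k) e ^ (θx)`, and `k ≤ θx`
makes this at most `e ^ (x f(θ))`.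
-/

theorem hasDerivAt_sum_range_pow_div_factorial {𝕜 : Type*} [NontriviallyNormedField 𝕜] [CharZero 𝕜]
    (k : ℕ) (x : 𝕜) :
    HasDerivAt (fun y : 𝕜 ↦ ∑ j ∈ Finset.range (k + 1), y ^ j / (j.factorial : 𝕜))
      (∑ j ∈ Finset.range k, x ^ j / (j.factorial : 𝕜)) x := by
  have hasDerivAt_term (j : ℕ) : HasDerivAt (fun y : 𝕜 ↦ y ^ (j + 1) / ((j + 1).factorial : 𝕜))
      (x ^ j / (j.factorial : 𝕜)) x := by
    refine ((hasDerivAt_pow (j + 1) x).div_const _).congr_deriv ?_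
    rw [Nat.factorial_succ, Nat.cast_mul, Nat.add_sub_cancel,
      mul_div_mul_left _ _ (Nat.cast_ne_zero.2 j.succ_ne_zero)]
  simp only [Finset.sum_range_succ', pow_zero]
  exact (HasDerivAt.fun_sum fun j _ ↦ hasDerivAt_term j).add_const _

theorem hasDerivAt_exp_neg_mul_sum_range_pow_div_factorial (k : ℕ) (x : ℝ) :
    HasDerivAt
      (fun y : ℝ ↦ Real.exp (-y) * ∑ j ∈ Finset.range (k + 1), y ^ j / (j.factorial : ℝ))
      (-(Real.exp (-x) * (x ^ k / (k.factorial : ℝ)))) x := by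
  refine ((hasDerivAt_neg x).exp.mul
    (hasDerivAt_sum_range_pow_div_factorial k x)).congr_deriv ?_
  rw [Finset.sum_range_succ]
  ring

theorem integral_exp_neg_mul_pow (a b : ℝ) (k : ℕ) :
    ∫ t in a..b, Real.exp (-t) * t ^ k =
      k.factorial * (Real.exp (-a) * ∑ j ∈ Finset.range (k + 1), a ^ j / (j.factorial : ℝ) -
        Real.exp (-b) * ∑ j ∈ Finset.range (k + 1), b ^ j / (j.factorial : ℝ)) := by
  have hasDerivAt_primitive (t : ℝ) :
      HasDerivAt (fun t : ℝ ↦ -(k.factorial : ℝ) *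
        (Real.exp (-t) * ∑ j ∈ Finset.range (k + 1), t ^ j / (j.factorial : ℝ)))
        (Real.exp (-t) * t ^ k) t := by
    refine ((hasDerivAt_exp_neg_mul_sum_range_pow_div_factorial k t).const_mul _).congr_deriv ?_
    field_simp
  rw [intervalIntegral.integral_eq_sub_of_hasDerivAt (fun t _ ↦ hasDerivAt_primitive t)
    (Continuous.intervalIntegrable (by fun_prop) _ _)]
  ring

theorem pow_div_factorial_mul_integral_exp_neg_mul_pow (a τ : ℝ) (k : ℕ) :
    τ ^ (k + 1) / (k.factorial : ℝ) * (∫ t in (0 : ℝ)..a, Real.exp (-(t * τ)) * t ^ k) =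
      1 - Real.exp (-(a * τ)) *
        ∑ j ∈ Finset.range (k + 1), (a * τ) ^ j / (j.factorial : ℝ) := by
  have rescale : τ ^ (k + 1) * (∫ t in (0 : ℝ)..a, Real.exp (-(t * τ)) * t ^ k) =
      ∫ u in (0 : ℝ)..a * τ, Real.exp (-u) * u ^ k :=
    calc
      _ = τ * ∫ t in (0 : ℝ)..a, Real.exp (-(t * τ)) * (t * τ) ^ k := by
        rw [pow_succ', mul_assoc, ← intervalIntegral.integral_const_mul]
        simp only [mul_pow, mul_assoc, mul_comm]
      _ = ∫ u in (0 : ℝ)..a * τ, Real.exp (-u) * u ^ k := by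
        rw [intervalIntegral.mul_integral_comp_mul_right (f := fun u ↦ Real.exp (-u) * u ^ k),
          zero_mul]
  have sum_at_zero : ∑ j ∈ Finset.range (k + 1), (0 : ℝ) ^ j / (j.factorial : ℝ) = 1 := by
    simp [Finset.sum_range_succ']
  rw [div_mul_eq_mul_div, rescale, integral_exp_neg_mul_pow, sum_at_zero, neg_zero, Real.exp_zero,
    one_mul, mul_div_cancel_left₀ _ (Nat.cast_ne_zero.2 k.factorial_ne_zero)]

theorem sum_range_mul_pow_div_factorial_le {r y : ℝ} (hr : 1 ≤ r) (hy : 0 ≤ y) (k : ℕ) :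
    ∑ j ∈ Finset.range (k + 1), (r * y) ^ j / (j.factorial : ℝ) ≤ r ^ k * Real.exp y :=
  calc
    _ = ∑ j ∈ Finset.range (k + 1), r ^ j * (y ^ j / (j.factorial : ℝ)) := by
      simp only [mul_pow, mul_div_assoc]
    _ ≤ ∑ j ∈ Finset.range (k + 1), r ^ k * (y ^ j / (j.factorial : ℝ)) := by
      gcongr with j hj
      exact Finset.mem_range_succ_iff.1 hj
    _ = r ^ k * ∑ j ∈ Finset.range (k + 1), y ^ j / (j.factorial : ℝ) := (Finset.mul_sum ..).symm
    _ ≤ r ^ k * Real.exp y := by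
      gcongr
      exact Real.sum_le_exp_of_nonneg hy _

theorem sum_range_pow_div_factorial_le_exp_of_le_mul {θ x : ℝ} {k : ℕ} (hθ₀ : 0 < θ) (hθ₁ : θ ≤ 1)
    (hk : k ≤ θ * x) :
    ∑ j ∈ Finset.range (k + 1), x ^ j / (j.factorial : ℝ) ≤
      Real.exp (x * (θ + θ * Real.log (1 / θ))) := by
  have one_le_inv : 1 ≤ 1 / θ := (one_le_div hθ₀).2 hθ₁
  have pow_le_exp : (1 / θ) ^ k ≤ Real.exp (θ * x * Real.log (1 / θ)) := by
    rw [← Real.exp_log (pow_pos (one_div_pos.2 hθ₀) k), Real.log_pow]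
    gcongr
    exact Real.log_nonneg one_le_inv
  calc
    _ = ∑ j ∈ Finset.range (k + 1), (1 / θ * (θ * x)) ^ j / (j.factorial : ℝ) := by
      rw [← mul_assoc, one_div_mul_cancel hθ₀.ne', one_mul]
    _ ≤ (1 / θ) ^ k * Real.exp (θ * x) :=
      sum_range_mul_pow_div_factorial_le one_le_inv (k.cast_nonneg.trans hk) k
    _ ≤ Real.exp (θ * x * Real.log (1 / θ)) * Real.exp (θ * x) := by gcongr
    _ = Real.exp (x * (θ + θ * Real.log (1 / θ))) := by rw [← Real.exp_add]; ring_nf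

theorem stmt_4_general (f : ℝ → ℝ) (hf : ∀ x : ℝ, f x = x + x * Real.log (1 / x))
    (θ₀ a τ : ℝ) (h0 : 0 < θ₀) (h1 : θ₀ ≤ 1) (k : ℕ) (hk : (k : ℝ) ≤ θ₀ * (a * τ)) :
    |τ ^ (k + 1) / (k.factorial : ℝ) * (∫ t in (0:ℝ)..a, Real.exp (-(t * τ)) * t ^ k) - 1|
      ≤ Real.exp (-(a * τ) * (1 - f θ₀)) := by
  have aτ_nonneg : 0 ≤ a * τ := nonneg_of_mul_nonneg_right (k.cast_nonneg.trans hk) h0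
  rw [pow_div_factorial_mul_integral_exp_neg_mul_pow, sub_sub_cancel_left, abs_neg,
    abs_of_nonneg (by positivity), hf]
  calc
    _ ≤ Real.exp (-(a * τ)) * Real.exp (a * τ * (θ₀ + θ₀ * Real.log (1 / θ₀))) := by
      gcongr
      exact sum_range_pow_div_factorial_le_exp_of_le_mul h0 h1 hk
    _ = _ := by rw [← Real.exp_add]; ring_nf

/-- With `f(x) = x + x·ln(1/x)` (and `f(0) = 0`), for `0 < θ₀ < 1`,
`a > 0`, `τ > 0` and `k ∈ ℕ` with `k ≤ θ₀ a τ`, one has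
`|(τ^{k+1}/k!) ∫_0^a e^{-tτ} t^k dt - 1| ≤ e^{-aτ(1 - f(θ₀))}/(1 - θ₀)`. -/
theorem stmt_4 (f : ℝ → ℝ) (hf : ∀ x : ℝ, f x = x + x * Real.log (1 / x))
    (θ₀ a τ : ℝ) (h0 : 0 < θ₀) (h1 : θ₀ < 1) (ha : 0 < a) (hτ : 0 < τ)
    (k : ℕ) (hk : (k : ℝ) ≤ θ₀ * (a * τ)) :
    |τ ^ (k + 1) / (k.factorial : ℝ) * (∫ t in (0:ℝ)..a, Real.exp (-(t * τ)) * t ^ k) - 1|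
      ≤ Real.exp (-(a * τ) * (1 - f θ₀)) / (1 - θ₀) :=
  (stmt_4_general f hf θ₀ a τ h0 h1.le k hk).trans <|
    le_div_self (Real.exp_nonneg _) (sub_pos.2 h1) (sub_le_self 1 h0.le)
end

section
/- Let C̃ > 0 and let F be a bounded continuous function on the closed right half-plane {τ ∈ ℂ : Re τ ≥ 0} that is holomorphic on the open right half-plane {Re τ > 0}. If |F(τ)| ≤ e^{−τ/C̃} for all real τ > 0, then there exists a constant M > 0 such that |F(τ)| ≤ M e^{−Re τ / C̃} for all τ with Re τ ≥ 0. -/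
/-!
Multiplying `f` by `exp (a * z)` leaves its norm on the imaginary axis unchanged, turns the decay
`exp (-a * x)` on the positive real axis into boundedness, and keeps the order of growth below `2`.
The Phragmén–Lindelöf principle in the right half-plane bounds the product by its supremum on the
imaginary axis, so the constant in the estimate on the real axis does not enter the conclusion.
-/

open Asymptotics Bornology Complex Filter

section

variable {E : Type*} [NormedAddCommGroup E]

theorem exists_isBigO_exp_rpow_of_norm_le {f : ℂ → E} {s : Set ℂ} {B d : ℝ}
    (hd : 0 < d) (hf : ∀ z ∈ s, ‖f z‖ ≤ B) :
    ∃ c < d, ∃ K, f =O[cobounded ℂ ⊓ 𝓟 s] fun z => Real.exp (K * ‖z‖ ^ c) := by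
  refine ⟨0, hd, 0, .of_bound B <| eventually_inf_principal.2 <| .of_forall fun z hz => ?_⟩
  simpa only [zero_mul, Real.exp_zero, norm_one, mul_one] using hf z hz

variable [NormedSpace ℂ E]

theorem norm_exp_ofReal_mul_smul_le_iff {a C : ℝ} {z : ℂ} {v : E} :
    ‖exp (a * z) • v‖ ≤ C ↔ ‖v‖ ≤ C * Real.exp (-(a * z.re)) := by
  rw [norm_smul, norm_exp, re_ofReal_mul, Real.exp_neg, ← div_eq_mul_inv,
    le_div_iff₀' (Real.exp_pos _)]

theorem isBigO_exp_mul_smul_of_isBigO_exp_rpow {f : ℂ → E} {l : Filter ℂ} {B c : ℝ} (a : ℂ)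
    (hl : l ≤ cobounded ℂ) (hf : f =O[l] fun z => Real.exp (B * ‖z‖ ^ c)) :
    (fun z => exp (a * z) • f z) =O[l] fun z => Real.exp ((‖a‖ + |B|) * ‖z‖ ^ max c 1) := by
  have hexp : (fun z => exp (a * z)) =O[l] fun z => Real.exp (‖a‖ * ‖z‖) :=
    .of_norm_le fun z => (norm_exp_le_exp_norm _).trans_eq (by rw [norm_mul])
  refine (hexp.smul hf).trans (.of_norm_eventuallyLE ?_)
  filter_upwards [(tendsto_norm_cobounded_atTop.mono_left hl).eventually_ge_atTop 1] with z hz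
  have hlinear : ‖z‖ ≤ ‖z‖ ^ max c 1 := Real.self_le_rpow_of_one_le hz (le_max_right c 1)
  have hpower : ‖z‖ ^ c ≤ ‖z‖ ^ max c 1 := Real.rpow_le_rpow_of_exponent_le hz (le_max_left c 1)
  rw [smul_eq_mul, ← Real.exp_add, Real.norm_of_nonneg (Real.exp_nonneg _), Real.exp_le_exp]
  calc ‖a‖ * ‖z‖ + B * ‖z‖ ^ c ≤ ‖a‖ * ‖z‖ ^ max c 1 + |B| * ‖z‖ ^ max c 1 := by
        gcongr
        exact le_abs_self B
    _ = (‖a‖ + |B|) * ‖z‖ ^ max c 1 := by ring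

theorem stmt_5_general {f : ℂ → E} {a C : ℝ} (hd : DiffContOnCl ℂ f {z | 0 < z.re})
    (hexp : ∃ c < (2 : ℝ), ∃ B,
      f =O[cobounded ℂ ⊓ 𝓟 {z | 0 < z.re}] fun z => Real.exp (B * ‖z‖ ^ c))
    (hre : (fun x : ℝ => f x) =O[atTop] fun x => Real.exp (-(a * x)))
    (him : ∀ x : ℝ, ‖f (x * I)‖ ≤ C) {z : ℂ} (hz : 0 ≤ z.re) :
    ‖f z‖ ≤ C * Real.exp (-(a * z.re)) := by
  let g : ℂ → E := fun w => exp (a * w) • f w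
  have hg_diff : DiffContOnCl ℂ g {w | 0 < w.re} :=
    (show Differentiable ℂ fun w : ℂ => exp (a * w) by fun_prop).diffContOnCl.smul hd
  have hg_growth : ∃ c < (2 : ℝ), ∃ B,
      g =O[cobounded ℂ ⊓ 𝓟 {w | 0 < w.re}] fun w => Real.exp (B * ‖w‖ ^ c) := by
    obtain ⟨c, hc, B, hf⟩ := hexp
    exact ⟨max c 1, max_lt hc one_lt_two, _,
      isBigO_exp_mul_smul_of_isBigO_exp_rpow a inf_le_left hf⟩
  have hg_real : IsBoundedUnder (· ≤ ·) atTop fun x : ℝ => ‖g x‖ := by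
    obtain ⟨K, hK⟩ := hre.bound
    refine isBoundedUnder_of_eventually_le (a := K) (hK.mono fun x hx => ?_)
    rwa [norm_exp_ofReal_mul_smul_le_iff, ofReal_re, ← Real.norm_of_nonneg (Real.exp_nonneg _)]
  have hg_imag (x : ℝ) : ‖g (x * I)‖ ≤ C := by
    simpa only [g, norm_exp_ofReal_mul_smul_le_iff, re_ofReal_mul, I_re, mul_zero, neg_zero,
      Real.exp_zero, mul_one] using him x
  exact norm_exp_ofReal_mul_smul_le_iff.1 <|
    PhragmenLindelof.right_half_plane_of_bounded_on_real hg_diff hg_growth hg_real hg_imag hz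

end

/-- Phragmén–Lindelöf. Let `F` be bounded and continuous on the
closed right half-plane, holomorphic on the open right half-plane, with
`|F(τ)| ≤ e^{-τ/C̃}` for all real `τ > 0`. Then there is `M > 0` with
`|F(τ)| ≤ M e^{-Re τ / C̃}` on the whole closed right half-plane. -/
theorem stmt_5 (Ct : ℝ) (hCt : 0 < Ct) (F : ℂ → ℂ) (B : ℝ)
    (hFb : ∀ τ : ℂ, 0 ≤ τ.re → ‖F τ‖ ≤ B)
    (hFc : ContinuousOn F {τ : ℂ | 0 ≤ τ.re})
    (hFh : DifferentiableOn ℂ F {τ : ℂ | 0 < τ.re})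
    (hdec : ∀ τ : ℝ, 0 < τ → ‖F (τ : ℂ)‖ ≤ Real.exp (-τ / Ct)) :
    ∃ M > (0:ℝ), ∀ τ : ℂ, 0 ≤ τ.re → ‖F τ‖ ≤ M * Real.exp (-τ.re / Ct) := by
  refine ⟨max B 1, by positivity, fun τ hτ => ?_⟩
  simp only [div_eq_inv_mul, mul_neg] at hdec ⊢
  exact stmt_5_general ⟨hFh, by rwa [closure_setOfPred_lt_re]⟩
    (exists_isBigO_exp_rpow_of_norm_le two_pos fun w hw => hFb w (le_of_lt hw))
    (.of_norm_eventuallyLE <| (eventually_gt_atTop 0).mono hdec)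
    (fun x => (hFb (x * I) (by simp)).trans (le_max_left B 1)) hτ
end

section
/- Let q̃ ∈ L^∞(ℝ, ℂ) be a bounded measurable function with support contained in [0,1], and let Lq̃(τ) = ∫_0^1 e^{−tτ} q̃(t) dt be its Laplace transform (an entire function of τ). Suppose there exist constants M, C̃ > 0 such that |Lq̃(τ)| ≤ M e^{−Re τ / C̃} for all τ ∈ ℂ with Re τ ≥ 0. Then q̃(t) = 0 for almost every t ∈ [0, 1/C̃); that is, the support of q̃ is contained in [1/C̃, 1]. -/
open MeasureTheory

/-!
Truncate `f` to `[a, b)` and let `L` be the Laplace integral of the truncation, an entire function.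
As `b - t ≥ 0` on `[a, b)`, the function `G τ = exp (b τ) L τ = ∫ t in [a, b), exp ((b - t) τ) f t`
is bounded by `‖f‖₁` for `Re τ ≤ 0`. The decay hypothesis and a trivial estimate of the integral
over `[b, ∞)` bound `G` on the positive real axis; since `G` is of exponential type and bounded on
the imaginary axis, the Phragmén–Lindelöf principle bounds it on the right half-plane. By Liouville
`G` is constant, and the Riemann–Lebesgue lemma on the imaginary axis makes the constant `0`. So the
Fourier transform of the truncation vanishes, and with it the truncation.
-/

section FourierInjectivity

open scoped FourierTransform SchwartzMap ContDiff

variable {V E : Type*} [NormedAddCommGroup V] [InnerProductSpace ℝ V] [FiniteDimensional ℝ V]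
  [MeasurableSpace V] [BorelSpace V] [NormedAddCommGroup E] [NormedSpace ℂ E]
  [CompleteSpace E]

theorem integral_fourier_smul_eq {φ : V → ℂ} {f : V → E} (hφ : Integrable φ)
    (hf : Integrable f) : ∫ ξ, 𝓕 φ ξ • f ξ = ∫ x, φ x • 𝓕 f x := by
  have h := VectorFourier.integral_fourierIntegral_smul_eq_flip (L := innerₗ V)
    Real.continuous_fourierChar continuous_inner hφ hf
  rwa [flip_innerₗ] at h

theorem ae_eq_zero_of_fourier_eq_zero {f : V → E} (hf : Integrable f)
    (h : ∀ ξ, 𝓕 f ξ = 0) : ∀ᵐ x, f x = 0 := by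
  refine ae_eq_zero_of_integral_contDiff_smul_eq_zero hf.locallyIntegrable fun g hg hgc ↦ ?_
  have hg_smooth : ContDiff ℝ ∞ (Complex.ofRealCLM ∘ g) := by fun_prop
  have hg_compact : HasCompactSupport (Complex.ofRealCLM ∘ g) := hgc.comp_left rfl
  let φ : 𝓢(V, ℂ) := hg_compact.toSchwartzMap hg_smooth
  let ψ : 𝓢(V, ℂ) := 𝓕⁻ φ
  have fourier_ψ : 𝓕 (ψ : V → ℂ) = φ := by rw [← SchwartzMap.fourier_coe]; simp [ψ]
  calc ∫ x, g x • f x = ∫ x, 𝓕 (ψ : V → ℂ) x • f x := by simp [fourier_ψ, φ]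
    _ = ∫ ξ, ψ ξ • 𝓕 f ξ := integral_fourier_smul_eq ψ.integrable hf
    _ = 0 := by simp [h]

end FourierInjectivity

section LaplaceIntegral

open Set Filter Asymptotics Bornology
open scoped FourierTransform

variable {E : Type*} [NormedAddCommGroup E] [NormedSpace ℂ E]
  {f : ℝ → E} {s : Set ℝ} {a b c : ℝ} {τ : ℂ}

/-- The Laplace transform of `f` restricted to `s`, that is `τ ↦ ∫ t in s, e ^ (-t τ) f t`; the
one-sided transform is the case `s = [0, ∞)`. It is the Bochner integral, hence `0` at every `τ`
where the integrand is not integrable. -/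
noncomputable def laplaceIntegral (s : Set ℝ) (f : ℝ → E) (τ : ℂ) : E :=
  ∫ t in s, Complex.exp (-(t * τ)) • f t

theorem norm_cexp_neg_ofReal_mul_smul (t : ℝ) (τ : ℂ) (x : E) :
    ‖Complex.exp (-(t * τ)) • x‖ = Real.exp (-(t * τ.re)) * ‖x‖ := by
  rw [norm_smul, Complex.norm_exp, Complex.neg_re, Complex.re_ofReal_mul]

theorem aestronglyMeasurable_cexp_neg_mul_smul (hf : IntegrableOn f s) (τ : ℂ) :
    AEStronglyMeasurable (fun t : ℝ ↦ Complex.exp (-(t * τ)) • f t) (volume.restrict s) :=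
  (Continuous.aestronglyMeasurable (by fun_prop)).smul hf.aestronglyMeasurable

theorem integrableOn_cexp_neg_mul_smul (hs : MeasurableSet s) (hf : IntegrableOn f s)
    (h : ∀ t ∈ s, -(t * τ.re) ≤ c) :
    IntegrableOn (fun t : ℝ ↦ Complex.exp (-(t * τ)) • f t) s := by
  refine (hf.norm.const_mul (Real.exp c)).mono' (aestronglyMeasurable_cexp_neg_mul_smul hf τ)
    (ae_restrict_of_forall_mem hs fun t ht ↦ ?_)
  rw [norm_cexp_neg_ofReal_mul_smul]
  gcongr
  exact h t ht

theorem norm_cexp_smul_laplaceIntegral_le (hs : MeasurableSet s) (hf : IntegrableOn f s)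
    (h : ∀ t ∈ s, (b - t) * τ.re ≤ c) :
    ‖Complex.exp (b * τ) • laplaceIntegral s f τ‖ ≤ Real.exp c * ∫ t in s, ‖f t‖ := by
  rw [laplaceIntegral, ← integral_smul, ← integral_const_mul]
  refine norm_integral_le_of_norm_le (hf.norm.const_mul _)
    (ae_restrict_of_forall_mem hs fun t ht ↦ ?_)
  rw [norm_smul, norm_cexp_neg_ofReal_mul_smul, Complex.norm_exp, Complex.re_ofReal_mul,
    ← mul_assoc, ← Real.exp_add, ← sub_eq_add_neg, ← sub_mul]
  gcongr
  exact h t ht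

theorem differentiable_laplaceIntegral (hs : MeasurableSet s) (hbdd : IsBounded s)
    (hf : IntegrableOn f s) : Differentiable ℂ (laplaceIntegral s f) := by
  intro τ
  obtain ⟨R, hR_pos, hR⟩ := hbdd.exists_pos_norm_le
  have exponent_le : ∀ t ∈ s, ∀ z : ℂ, -(t * z.re) ≤ R * ‖z‖ := fun t ht z ↦
    calc -(t * z.re) ≤ ‖t‖ * ‖z.re‖ := by rw [← norm_mul]; exact neg_le_abs _
      _ ≤ R * ‖z‖ := by gcongr; exacts [hR t ht, Complex.abs_re_le_norm z]
  have hasDerivAt_integrand (t : ℝ) (z : ℂ) :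
      HasDerivAt (fun z ↦ Complex.exp (-(t * z)) • f t)
        (-(t : ℂ) • Complex.exp (-(t * z)) • f t) z := by
    have := (((hasDerivAt_id' z).const_mul (t : ℂ)).fun_neg.cexp).smul_const (f t)
    rwa [mul_one, mul_comm, mul_smul] at this
  have norm_deriv_le : ∀ t ∈ s, ∀ z ∈ Metric.ball τ 1,
      ‖-(t : ℂ) • Complex.exp (-(t * z)) • f t‖ ≤ R * (Real.exp (R * (‖τ‖ + 1)) * ‖f t‖) := by
    intro t ht z hz
    have hz_norm : ‖z‖ ≤ ‖τ‖ + 1 := by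
      linarith [norm_sub_norm_le z τ, mem_ball_iff_norm.1 hz]
    rw [norm_smul, norm_cexp_neg_ofReal_mul_smul, norm_neg, Complex.norm_real]
    gcongr
    · exact hR t ht
    · exact (exponent_le t ht z).trans (by gcongr)
  exact (hasDerivAt_integral_of_dominated_loc_of_deriv_le (Metric.ball_mem_nhds τ one_pos)
    (.of_forall (aestronglyMeasurable_cexp_neg_mul_smul hf))
    (integrableOn_cexp_neg_mul_smul hs hf fun t ht ↦ exponent_le t ht τ)
    ((Continuous.aestronglyMeasurable (by fun_prop)).smul
      (aestronglyMeasurable_cexp_neg_mul_smul hf τ))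
    (ae_restrict_of_forall_mem hs norm_deriv_le)
    ((hf.norm.const_mul _).const_mul _)
    (.of_forall fun t z _ ↦ hasDerivAt_integrand t z)).2.differentiableAt

theorem differentiable_cexp_smul_laplaceIntegral (hs : MeasurableSet s) (hbdd : IsBounded s)
    (hf : IntegrableOn f s) (b : ℝ) :
    Differentiable ℂ fun z ↦ Complex.exp (b * z) • laplaceIntegral s f z :=
  .smul (by fun_prop) (differentiable_laplaceIntegral hs hbdd hf)

theorem fourier_indicator_eq_laplaceIntegral (hs : MeasurableSet s) (w : ℝ) :
    𝓕 (s.indicator f) w = laplaceIntegral s f (2 * Real.pi * w * Complex.I) := by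
  rw [Real.fourier_real_eq_integral_exp_smul, laplaceIntegral, ← integral_indicator hs]
  congr 1 with t
  have exponent_eq : ((-2 * Real.pi * t * w : ℝ) : ℂ) * Complex.I =
      -(t * (2 * Real.pi * w * Complex.I)) := by push_cast; ring
  rw [exponent_eq]
  exact (indicator_smul_apply s (fun t : ℝ ↦ Complex.exp (-(t * (2 * Real.pi * w * Complex.I)))) f
    t).symm

theorem isBigO_exp_neg_iff_isBoundedUnder {F : ℝ → E} :
    F =O[atTop] (fun x ↦ Real.exp (-(b * x))) ↔
      IsBoundedUnder (· ≤ ·) atTop fun x : ℝ ↦ ‖Complex.exp (b * x) • F x‖ := by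
  rw [isBigO_iff_isBoundedUnder_le_div (.of_forall fun x ↦ (Real.exp_pos _).ne')]
  simp [norm_smul, Complex.norm_exp, Real.exp_neg, mul_comm]

theorem isBigO_laplaceIntegral_Ici (hf : IntegrableOn f (Ici b)) :
    (fun x : ℝ ↦ laplaceIntegral (Ici b) f x) =O[atTop] fun x ↦ Real.exp (-(b * x)) := by
  refine isBigO_exp_neg_iff_isBoundedUnder.2 (isBoundedUnder_of_eventually_le
    (a := Real.exp 0 * ∫ t in Ici b, ‖f t‖) ?_)
  filter_upwards [eventually_ge_atTop 0] with x hx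
  exact norm_cexp_smul_laplaceIntegral_le measurableSet_Ici hf fun t ht ↦
    mul_nonpos_of_nonpos_of_nonneg (sub_nonpos.2 ht) hx

theorem laplaceIntegral_Ico_add_Ici (hab : a ≤ b) (hf : IntegrableOn f (Ici a)) (hτ : 0 ≤ τ.re) :
    laplaceIntegral (Ico a b) f τ + laplaceIntegral (Ici b) f τ = laplaceIntegral (Ici a) f τ := by
  have hint := integrableOn_cexp_neg_mul_smul (τ := τ) measurableSet_Ici hf fun t ht ↦
    neg_le_neg (mul_le_mul_of_nonneg_right ht hτ)
  simp only [laplaceIntegral, ← Ico_union_Ici_eq_Ici hab]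
  exact (setIntegral_union (disjoint_left.2 fun _ ht ↦ ht.2.not_ge) measurableSet_Ici
    (hint.mono_set Ico_subset_Ici_self) (hint.mono_set (Ici_subset_Ici.2 hab))).symm

theorem isBigO_laplaceIntegral_Ico_of_Ici (hf : IntegrableOn f (Ici a))
    (h : (fun x : ℝ ↦ laplaceIntegral (Ici a) f x) =O[atTop] fun x ↦ Real.exp (-(b * x))) :
    (fun x : ℝ ↦ laplaceIntegral (Ico a b) f x) =O[atTop] fun x ↦ Real.exp (-(b * x)) := by
  rcases lt_or_ge b a with hba | hab
  · simpa [laplaceIntegral, Ico_eq_empty hba.not_gt] using isBigO_zero _ _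
  · have htail := isBigO_laplaceIntegral_Ici (hf.mono_set (Ici_subset_Ici.2 hab))
    refine (h.sub htail).congr' ?_ .rfl
    filter_upwards [eventually_ge_atTop 0] with x hx
    exact sub_eq_of_eq_add (laplaceIntegral_Ico_add_Ici hab hf hx).symm

theorem norm_cexp_smul_laplaceIntegral_Ico_le (hf : IntegrableOn f (Ico a b))
    (h : (fun x : ℝ ↦ laplaceIntegral (Ico a b) f x) =O[atTop] fun x ↦ Real.exp (-(b * x)))
    (τ : ℂ) : ‖Complex.exp (b * τ) • laplaceIntegral (Ico a b) f τ‖ ≤ ∫ t in Ico a b, ‖f t‖ := by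
  have bound_of_re_nonpos (z : ℂ) (hz : z.re ≤ 0) :
      ‖Complex.exp (b * z) • laplaceIntegral (Ico a b) f z‖ ≤ ∫ t in Ico a b, ‖f t‖ := by
    simpa using norm_cexp_smul_laplaceIntegral_le (c := 0) measurableSet_Ico hf fun t ht ↦
      mul_nonpos_of_nonneg_of_nonpos (sub_nonneg.2 ht.2.le) hz
  have exponential_type (z : ℂ) (hz : 0 < z.re) :
      ‖Complex.exp (b * z) • laplaceIntegral (Ico a b) f z‖ ≤
        Real.exp ((b - a) * ‖z‖) * ∫ t in Ico a b, ‖f t‖ :=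
    norm_cexp_smul_laplaceIntegral_le measurableSet_Ico hf fun t ht ↦
      mul_le_mul (by linarith [ht.1]) (Complex.re_le_norm z) hz.le (by linarith [ht.1, ht.2])
  rcases le_total τ.re 0 with hτ | hτ
  · exact bound_of_re_nonpos τ hτ
  · refine PhragmenLindelof.right_half_plane_of_bounded_on_real
      (differentiable_cexp_smul_laplaceIntegral measurableSet_Ico (Metric.isBounded_Ico a b) hf
        b).diffContOnCl
      ⟨1, one_lt_two, b - a, .of_bound (∫ t in Ico a b, ‖f t‖) ?_⟩
      (isBigO_exp_neg_iff_isBoundedUnder.1 h) (fun x ↦ bound_of_re_nonpos _ (by simp)) hτ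
    refine eventually_inf_principal.2 (.of_forall fun z hz ↦ ?_)
    simpa [mul_comm] using exponential_type z hz

theorem laplaceIntegral_Ico_eq_zero (hf : IntegrableOn f (Ico a b))
    (h : (fun x : ℝ ↦ laplaceIntegral (Ico a b) f x) =O[atTop] fun x ↦ Real.exp (-(b * x)))
    (τ : ℂ) : laplaceIntegral (Ico a b) f τ = 0 := by
  set G : ℂ → E := fun z ↦ Complex.exp (b * z) • laplaceIntegral (Ico a b) f z with hG
  have hconst : ∀ z w, G z = G w :=
    (differentiable_cexp_smul_laplaceIntegral measurableSet_Ico (Metric.isBounded_Ico a b) hf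
      b).apply_eq_apply_of_bounded (isBounded_iff_forall_norm_le.2
        ⟨_, forall_mem_range.2 (norm_cexp_smul_laplaceIntegral_Ico_le hf h)⟩)
  have hnorm (w : ℝ) : ‖𝓕 ((Ico a b).indicator f) w‖ = ‖G τ‖ := by
    rw [fourier_indicator_eq_laplaceIntegral measurableSet_Ico,
      hconst τ (2 * Real.pi * w * Complex.I), hG, norm_smul, Complex.norm_exp]
    simp
  have hlim := (Real.zero_at_infty_fourier ((Ico a b).indicator f)).norm
  simp only [hnorm, norm_zero] at hlim
  have hG_zero : G τ = 0 := norm_eq_zero.1 (tendsto_nhds_unique tendsto_const_nhds hlim)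
  exact (smul_eq_zero.1 hG_zero).resolve_left (Complex.exp_ne_zero _)

theorem ae_eq_zero_of_laplaceIntegral_eq_zero [CompleteSpace E] (hs : MeasurableSet s)
    (hf : IntegrableOn f s) (h : ∀ τ : ℂ, τ.re = 0 → laplaceIntegral s f τ = 0) :
    ∀ᵐ t ∂volume.restrict s, f t = 0 := by
  have hind : ∀ᵐ t, s.indicator f t = 0 :=
    ae_eq_zero_of_fourier_eq_zero (hf.integrable_indicator hs) fun w ↦ by
      rw [fourier_indicator_eq_laplaceIntegral hs, h _ (by simp)]
  filter_upwards [ae_restrict_of_ae hind, ae_restrict_mem hs] with t ht ht_mem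
  rwa [indicator_of_mem ht_mem] at ht

theorem laplaceIntegral_Ici_eq_intervalIntegral (hab : a ≤ b) (h : ∀ t, t ∉ Icc a b → f t = 0)
    (τ : ℂ) :
    laplaceIntegral (Ici a) f τ = ∫ t in a..b, Complex.exp (-(t * τ)) • f t := by
  rw [intervalIntegral.integral_of_le hab, ← integral_Icc_eq_integral_Ioc]
  refine setIntegral_eq_of_subset_of_forall_sdiff_eq_zero measurableSet_Ici Icc_subset_Ici_self
    fun t ht ↦ ?_
  rw [h t ht.2, smul_zero]

theorem stmt_6_general [CompleteSpace E] (hf : IntegrableOn f (Ici a))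
    (h : (fun x : ℝ ↦ laplaceIntegral (Ici a) f x) =O[atTop] fun x ↦ Real.exp (-(b * x))) :
    ∀ᵐ t ∂volume.restrict (Ico a b), f t = 0 := by
  have hf_Ico : IntegrableOn f (Ico a b) := hf.mono_set Ico_subset_Ici_self
  exact ae_eq_zero_of_laplaceIntegral_eq_zero measurableSet_Ico hf_Ico fun τ _ ↦
    laplaceIntegral_Ico_eq_zero hf_Ico (isBigO_laplaceIntegral_Ico_of_Ici hf h) τ

end LaplaceIntegral

/-- Paley–Wiener type support statement. Let `q̃ ∈ L^∞(ℝ, ℂ)` be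
supported in `[0,1]` and suppose its Laplace transform satisfies
`|Lq̃(τ)| ≤ M e^{-Re τ / C̃}` on the closed right half-plane. Then `q̃ = 0` a.e. on
`[0, 1/C̃)`, i.e. `supp q̃ ⊆ [1/C̃, 1]`. -/
theorem stmt_6 (qt : ℝ → ℂ) (hmeas : Measurable qt) (M₀ : ℝ)
    (hbdd : ∀ t : ℝ, ‖qt t‖ ≤ M₀)
    (hsupp : ∀ t : ℝ, t ∉ Set.Icc (0:ℝ) 1 → qt t = 0)
    (M Ct : ℝ) (hM : 0 < M) (hCt : 0 < Ct)
    (hdec : ∀ τ : ℂ, 0 ≤ τ.re →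
      ‖∫ t in (0:ℝ)..1, Complex.exp (-((t : ℂ) * τ)) * qt t‖ ≤ M * Real.exp (-τ.re / Ct)) :
    ∀ᵐ t ∂(volume.restrict (Set.Ico (0:ℝ) (1 / Ct))), qt t = 0 := by
  have hint : IntegrableOn qt (Set.Icc 0 1) := Measure.integrableOn_of_bounded
    measure_Icc_lt_top.ne hmeas.aestronglyMeasurable (.of_forall hbdd)
  refine stmt_6_general (hint.integrable_of_forall_notMem_eq_zero hsupp).integrableOn
    (.of_bound M ?_)
  filter_upwards [Filter.eventually_ge_atTop 0] with x hx
  rw [laplaceIntegral_Ici_eq_intervalIntegral zero_le_one hsupp,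
    Real.norm_of_nonneg (by positivity)]
  simpa [neg_div, div_eq_inv_mul] using hdec x hx
end

section
/- Let n ≥ 1, let A and C be symmetric n×n complex matrices and B an invertible n×n complex matrix. Define φ(x, y) = (1/2)⟨Ax, x⟩ + ⟨By, x⟩ + (1/2)⟨Cy, y⟩, set D = (Bᵀ)⁻¹ C B⁻¹, let α ∈ ℝ, and let u : ℝⁿ → ℂ be continuous with compact support. For h > 0 and x ∈ ℝⁿ define F(h, x) = h^α ∫_{ℝⁿ} e^{iφ(x,y)/h} u(y) dy. Then F is smooth on (0, ∞) × ℝⁿ and satisfies, for all h > 0 and x ∈ ℝⁿ: (h/i) ∂_h F + (1/h) [ (−(1/2)⟨Ax, x⟩ + (1/2)⟨DAx, Ax⟩) F + Σ_{j=1}^n (x − DAx)_j (h/i) ∂_{x_j} F − (h²/2) Σ_{j,l=1}^n D_{jl} ∂_{x_j} ∂_{x_l} F ] + i (α + (1/2) tr(AD)) F = 0. -/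
open Matrix MeasureTheory

/-!
For each fixed `y`, the kernel `h^α e^{iφ(x, y)/h}` is itself annihilated by `hD_h + (1/h) P_α`.
Indeed `ξ = ∂ₓφ = Ax + By` satisfies the eikonal equation `φ(x, y) = p(x, ξ)`, because `Bᵀ D B = C`;
this cancels the terms of order `h⁻¹`. At order `h⁰`, the amplitude `h^α` contributes `-iα` and
the Hessian `∂ₓ²φ = A` contributes `-(i/2) tr(AD)`, which the zeroth-order term of `P_α` cancels.
Since `u` has compact support, the operator and smoothness pass under the integral.
-/

section ParametricIntegral

open Set
open scoped ContDiff Topology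

variable {𝕜 : Type*} [RCLike 𝕜]

theorem exists_eventually_forall_norm_le_of_isCompact {X Z E : Type*} [TopologicalSpace X]
    [TopologicalSpace Z] [SeminormedAddCommGroup E] {f : X × Z → E} {x : X} {k : Set Z}
    (hk : IsCompact k) (hf : ∀ z ∈ k, ContinuousAt f (x, z)) :
    ∃ M, ∀ᶠ x' in 𝓝 x, ∀ z ∈ k, ‖f (x', z)‖ ≤ M := by
  have hcont : ContinuousOn (fun z ↦ f (x, z)) k := fun z hz ↦
    ((hf z hz).comp (f := fun z ↦ (x, z)) (by fun_prop)).continuousWithinAt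
  obtain ⟨M, hM⟩ := hk.exists_bound_of_continuousOn hcont
  refine ⟨M + 1, hk.eventually_forall_of_forall_eventually fun z hz ↦ ?_⟩
  exact ((hf z hz).norm.eventually_lt_const ((hM z hz).trans_lt (lt_add_one M))).mono
    fun _ h ↦ h.le

theorem integrable_smul_of_hasCompactSupport {Z E : Type*} [TopologicalSpace Z] [T2Space Z]
    [MeasurableSpace Z] [OpensMeasurableSpace Z] [NormedAddCommGroup E] [NormedSpace 𝕜 E]
    [SecondCountableTopologyEither Z E] {μ : Measure Z} {u : Z → 𝕜} {f : Z → E}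
    (hcs : HasCompactSupport u) (hu : Integrable u μ) (hf : Continuous f) :
    Integrable (fun z ↦ u z • f z) μ :=
  (integrableOn_iff_integrable_of_support_subset
    ((Function.support_smul_subset_left u f).trans (subset_tsupport u))).1
    (hu.integrableOn.smul_continuousOn hf.continuousOn hcs.isCompact)

theorem integrable_mul_of_hasCompactSupport {Z : Type*} [TopologicalSpace Z] [T2Space Z]
    [MeasurableSpace Z] [OpensMeasurableSpace Z] {μ : Measure Z} {u f : Z → 𝕜}
    (hcs : HasCompactSupport u) (hu : Integrable u μ) (hf : Continuous f) :
    Integrable (fun z ↦ f z * u z) μ := by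
  simpa only [smul_eq_mul, mul_comm] using integrable_smul_of_hasCompactSupport hcs hu hf

theorem continuous_right_of_continuousOn {X Z E : Type*} [TopologicalSpace X]
    [TopologicalSpace Z] [TopologicalSpace E] {f : X × Z → E} {S : Set X} {x : X}
    (hf : ContinuousOn f (S ×ˢ univ)) (hx : x ∈ S) :
    Continuous fun z ↦ f (x, z) :=
  hf.comp_continuous (by fun_prop) fun _ ↦ ⟨hx, mem_univ _⟩

variable {P Y : Type*} [NormedAddCommGroup P] [NormedSpace ℝ P]
  [NormedAddCommGroup Y] [NormedSpace ℝ Y] {K : P → Y → 𝕜} {S : Set P} {p : P} {u : Y → 𝕜}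

theorem contDiffOn_fderiv_left {m n : ℕ∞ω} (hS : IsOpen S)
    (hK : ContDiffOn ℝ n (Function.uncurry K) (S ×ˢ univ)) (hmn : m + 1 ≤ n) :
    ContDiffOn ℝ m (fun q : P × Y ↦ fderiv ℝ (K · q.2) q.1) (S ×ˢ univ) := by
  intro q hq
  have hKq : ContDiffAt ℝ n (Function.uncurry K) q :=
    hK.contDiffAt ((hS.prod isOpen_univ).mem_nhds hq)
  exact (ContDiffAt.fderiv (f := fun (q : P × Y) p ↦ K p q.2) (g := Prod.fst)
    (hKq.comp (q, q.1) (f := fun r : (P × Y) × P ↦ (r.2, r.1.2)) (by fun_prop))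
    contDiffAt_fst hmn).contDiffWithinAt

theorem contDiffOn_slice_left {P' : Type*} [NormedAddCommGroup P'] [NormedSpace ℝ P']
    {K : P × P' → Y → 𝕜} {T : Set P'} {p' : P'} {n : ℕ∞ω} (hp' : p' ∈ T)
    (hK : ContDiffOn ℝ n (Function.uncurry K) ((S ×ˢ T) ×ˢ univ)) :
    ContDiffOn ℝ n (Function.uncurry fun p ↦ K (p, p')) (S ×ˢ univ) :=
  hK.comp (f := fun q : P × Y ↦ ((q.1, p'), q.2)) (by fun_prop)
    fun q hq ↦ ⟨⟨hq.1, hp'⟩, mem_univ _⟩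

theorem contDiffOn_slice_right {P' : Type*} [NormedAddCommGroup P'] [NormedSpace ℝ P']
    {K : P × P' → Y → 𝕜} {T : Set P'} {n : ℕ∞ω} (hp : p ∈ S)
    (hK : ContDiffOn ℝ n (Function.uncurry K) ((S ×ˢ T) ×ˢ univ)) :
    ContDiffOn ℝ n (Function.uncurry fun p' ↦ K (p, p')) (T ×ˢ univ) :=
  hK.comp (f := fun q : P' × Y ↦ ((p, q.1), q.2)) (by fun_prop)
    fun q hq ↦ ⟨⟨hp, hq.1⟩, mem_univ _⟩

theorem contDiffOn_deriv_left {K : ℝ → Y → 𝕜} {S : Set ℝ} {m n : ℕ∞ω} (hS : IsOpen S)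
    (hK : ContDiffOn ℝ n (Function.uncurry K) (S ×ˢ univ)) (hmn : m + 1 ≤ n) :
    ContDiffOn ℝ m (Function.uncurry fun s y ↦ deriv (K · y) s) (S ×ˢ univ) := by
  simpa only [fderiv_apply_one_eq_deriv, Function.uncurry_def] using
    (contDiffOn_fderiv_left hS hK hmn).clm_apply (contDiffOn_const (c := (1 : ℝ)))

theorem differentiableAt_left_of_contDiffOn (hS : IsOpen S)
    (hK : ContDiffOn ℝ 1 (Function.uncurry K) (S ×ˢ univ)) (hp : p ∈ S) (y : Y) :
    DifferentiableAt ℝ (K · y) p :=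
  ((hK.contDiffAt ((hS.prod isOpen_univ).mem_nhds ⟨hp, mem_univ y⟩)).comp p
    (f := fun p ↦ (p, y)) (by fun_prop)).differentiableAt one_ne_zero

variable [SecondCountableTopology Y] [MeasurableSpace Y] [OpensMeasurableSpace Y] {μ : Measure Y}

theorem hasFDerivAt_integral_mul_of_contDiffOn (hcs : HasCompactSupport u) (hu : Integrable u μ)
    (hS : IsOpen S) (hK : ContDiffOn ℝ 1 (Function.uncurry K) (S ×ˢ univ)) (hp : p ∈ S) :
    HasFDerivAt (fun p ↦ ∫ y, K p y * u y ∂μ) (∫ y, u y • fderiv ℝ (K · y) p ∂μ) p := by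
  have hK' : ContinuousOn (fun q : P × Y ↦ fderiv ℝ (K · q.2) q.1) (S ×ˢ univ) :=
    (contDiffOn_fderiv_left (m := 0) hS hK (by simp)).continuousOn
  have hint : ∀ p ∈ S, Integrable (fun y ↦ K p y * u y) μ := fun p hp ↦
    integrable_mul_of_hasCompactSupport hcs hu (continuous_right_of_continuousOn hK.continuousOn hp)
  obtain ⟨M, hM⟩ := exists_eventually_forall_norm_le_of_isCompact hcs.isCompact fun y _ ↦
    hK'.continuousAt ((hS.prod isOpen_univ).mem_nhds ⟨hp, mem_univ y⟩)
  refine hasFDerivAt_integral_of_dominated_of_fderiv_le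
    (F := fun p y ↦ K p y * u y) (F' := fun p y ↦ u y • fderiv ℝ (K · y) p)
    (bound := fun y ↦ ‖u y‖ * M)
    (Filter.inter_mem (hS.mem_nhds hp) hM) ?_ (hint p hp) ?_ ?_ (hu.norm.mul_const M) ?_
  · filter_upwards [hS.mem_nhds hp] with q hq using (hint q hq).aestronglyMeasurable
  · exact (integrable_smul_of_hasCompactSupport hcs hu
      (continuous_right_of_continuousOn hK' hp)).aestronglyMeasurable
  · refine .of_forall fun y q hq ↦ ?_
    rw [norm_smul]
    by_cases hy : y ∈ tsupport u
    · exact mul_le_mul_of_nonneg_left (hq.2 y hy) (norm_nonneg _)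
    · simp [image_eq_zero_of_notMem_tsupport hy]
  · exact .of_forall fun y q hq ↦
      (differentiableAt_left_of_contDiffOn hS hK hq.1 y).hasFDerivAt.mul_const (u y)

theorem fderiv_integral_mul_apply (hcs : HasCompactSupport u) (hu : Integrable u μ)
    (hS : IsOpen S) (hK : ContDiffOn ℝ 1 (Function.uncurry K) (S ×ˢ univ)) (hp : p ∈ S) (v : P) :
    fderiv ℝ (fun p ↦ ∫ y, K p y * u y ∂μ) p v = ∫ y, fderiv ℝ (K · y) p v * u y ∂μ := by
  have hK' := continuous_right_of_continuousOn
    (contDiffOn_fderiv_left (m := 0) hS hK (by simp)).continuousOn hp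
  rw [(hasFDerivAt_integral_mul_of_contDiffOn hcs hu hS hK hp).fderiv,
    ContinuousLinearMap.integral_apply (integrable_smul_of_hasCompactSupport hcs hu hK')]
  simp only [_root_.smul_apply, smul_eq_mul, mul_comm]

theorem deriv_integral_mul {K : ℝ → Y → 𝕜} {S : Set ℝ} {h : ℝ} (hcs : HasCompactSupport u)
    (hu : Integrable u μ) (hS : IsOpen S) (hK : ContDiffOn ℝ 1 (Function.uncurry K) (S ×ˢ univ))
    (hh : h ∈ S) :
    deriv (fun s ↦ ∫ y, K s y * u y ∂μ) h = ∫ y, deriv (K · y) h * u y ∂μ := by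
  simpa only [fderiv_apply_one_eq_deriv] using
    fderiv_integral_mul_apply hcs hu hS hK hh 1

theorem contDiffOn_integral_mul [FiniteDimensional ℝ P] (hcs : HasCompactSupport u)
    (hu : Integrable u μ) (hS : IsOpen S) (hK : ContDiffOn ℝ ∞ (Function.uncurry K) (S ×ˢ univ)) :
    ContDiffOn ℝ ∞ (fun p ↦ ∫ y, K p y * u y ∂μ) S := by
  refine contDiffOn_infty.2 fun n ↦ ?_
  have hdiff {K : P → Y → 𝕜} (hK : ContDiffOn ℝ ∞ (Function.uncurry K) (S ×ˢ univ)) :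
      DifferentiableOn ℝ (fun p ↦ ∫ y, K p y * u y ∂μ) S := fun p hp ↦
    (hasFDerivAt_integral_mul_of_contDiffOn hcs hu hS (hK.of_le (mod_cast le_top))
      hp).differentiableAt.differentiableWithinAt
  induction n generalizing K with
  | zero => exact contDiffOn_zero.2 (hdiff hK).continuousOn
  | succ n ih =>
    have hKv (v : P) :
        ContDiffOn ℝ ∞ (Function.uncurry fun p y ↦ fderiv ℝ (K · y) p v) (S ×ˢ univ) :=
      (contDiffOn_fderiv_left hS hK le_rfl).clm_apply contDiffOn_const
    push_cast
    refine (contDiffOn_succ_iff_fderiv_apply hS.uniqueDiffOn).2 ⟨hdiff hK, by simp, fun v ↦ ?_⟩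
    refine (ih (hKv v)).congr fun p hp ↦ ?_
    rw [fderivWithin_of_isOpen hS hp,
      fderiv_integral_mul_apply hcs hu hS (hK.of_le (mod_cast le_top)) hp]

end ParametricIntegral

section Congruence

variable {ι R : Type*} [Fintype ι] [DecidableEq ι] [CommRing R] {B C : Matrix ι ι R}

theorem isSymm_transpose_inv_mul_mul_inv (hC : C.IsSymm) : (Bᵀ⁻¹ * C * B⁻¹).IsSymm := by
  rw [IsSymm, transpose_mul, transpose_mul, hC.eq, ← transpose_nonsing_inv, transpose_transpose,
    Matrix.mul_assoc]

theorem transpose_mul_transpose_inv_mul_mul_inv_mul (hB : IsUnit B.det) :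
    Bᵀ * (Bᵀ⁻¹ * C * B⁻¹) * B = C := by
  rw [Matrix.mul_assoc Bᵀ⁻¹, mul_nonsing_inv_cancel_left _ _ (by rwa [det_transpose]),
    Matrix.mul_assoc, nonsing_inv_mul _ hB, Matrix.mul_one]

end Congruence

noncomputable section FBI

open Set
open scoped ContDiff

variable {ι : Type*}

/-- The inclusion `ℝⁿ ⊆ ℂⁿ`, along which the complex matrices act on real points. -/
def complexify (x : ι → ℝ) : ι → ℂ := fun j ↦ (x j : ℂ)

theorem complexify_add_smul (x v : ι → ℝ) (t : ℝ) :
    complexify (x + t • v) = complexify x + (t : ℂ) • complexify v := by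
  ext k
  simp [complexify]

theorem complexify_single [DecidableEq ι] (j : ι) (c : ℝ) :
    complexify (Pi.single j c) = Pi.single j (c : ℂ) := by
  ext k
  simp [complexify, Pi.single_apply, apply_ite Complex.ofReal]

section PartialDeriv

variable [DecidableEq ι]

/-- The partial derivative `∂f/∂x_j`; it agrees with Mathlib's `lineDeriv` along the `j`-th basis
vector where `f` is differentiable. -/
def partialDeriv (f : (ι → ℝ) → ℂ) (j : ι) (x : ι → ℝ) : ℂ :=
  fderiv ℝ f x (Pi.single j 1)

variable [Finite ι]

theorem partialDeriv_const_mul {f : (ι → ℝ) → ℂ} {x : ι → ℝ} (c : ℂ)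
    (hf : DifferentiableAt ℝ f x) (j : ι) :
    partialDeriv (fun x ↦ c * f x) j x = c * partialDeriv f j x := by
  have := Fintype.ofFinite ι
  simp only [partialDeriv, fderiv_const_mul hf, _root_.smul_apply, smul_eq_mul]

theorem partialDeriv_mul {f g : (ι → ℝ) → ℂ} {x : ι → ℝ} (hf : DifferentiableAt ℝ f x)
    (hg : DifferentiableAt ℝ g x) (j : ι) :
    partialDeriv (fun x ↦ f x * g x) j x = partialDeriv f j x * g x + f x * partialDeriv g j x := by
  have := Fintype.ofFinite ι
  simp only [partialDeriv, fderiv_fun_mul hf hg, _root_.add_apply, _root_.smul_apply, smul_eq_mul]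
  ring

theorem partialDeriv_eq_of_quadratic_along {f : (ι → ℝ) → ℂ} {x : ι → ℝ} {j : ι} {a b c : ℂ}
    (hf : DifferentiableAt ℝ f x)
    (hline : ∀ t : ℝ, f (x + t • Pi.single j 1) = a + t * b + (t : ℂ) ^ 2 * c) :
    partialDeriv f j x = b := by
  have := Fintype.ofFinite ι
  have ht : HasDerivAt (fun t : ℝ ↦ (t : ℂ)) 1 0 := Complex.ofRealCLM.hasDerivAt
  have hderiv : HasDerivAt (fun t : ℝ ↦ f (x + t • Pi.single j 1)) b 0 := by
    simp only [hline]
    exact (((ht.mul_const b).const_add a).add ((ht.pow 2).mul_const c)).congr_deriv (by simp)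
  rw [partialDeriv, ← hf.lineDeriv_eq_fderiv]
  exact hderiv.deriv

end PartialDeriv

variable [Fintype ι]

@[fun_prop]
theorem contDiff_complexify {n : ℕ∞ω} : ContDiff ℝ n (complexify : (ι → ℝ) → ι → ℂ) :=
  contDiff_pi.2 fun j ↦ Complex.ofRealCLM.contDiff.comp (contDiff_apply ℝ ℝ j)

/-- The quadratic phase `φ(x, y)`, holomorphic in both variables. -/
def fbiPhase (A B C : Matrix ι ι ℂ) (x y : ι → ℂ) : ℂ :=
  (1 / 2) * (A.mulVec x ⬝ᵥ x) + (B.mulVec y ⬝ᵥ x) + (1 / 2) * (C.mulVec y ⬝ᵥ y)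

/-- The `x`-gradient `ξ = ∂ₓφ(x, y)` of `fbiPhase A B C` for symmetric `A`. -/
def fbiPhaseGradient (A B : Matrix ι ι ℂ) (x y : ι → ℂ) : ι → ℂ :=
  A.mulVec x + B.mulVec y

/-- The symbol `p(x, ξ)` of the evolution equation in `h`. -/
def fbiSymbol (A D : Matrix ι ι ℂ) (x ξ : ι → ℂ) : ℂ :=
  -(1 / 2) * (A.mulVec x ⬝ᵥ x) + (1 / 2) * (D.mulVec (A.mulVec x) ⬝ᵥ A.mulVec x)
    + (x - D.mulVec (A.mulVec x)) ⬝ᵥ ξ + (1 / 2) * (D.mulVec ξ ⬝ᵥ ξ)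

theorem fbiPhase_eq_fbiSymbol {A B C D : Matrix ι ι ℂ} (hD : D.IsSymm) (hC : Bᵀ * D * B = C)
    (x y : ι → ℂ) :
    fbiPhase A B C x y = fbiSymbol A D x (fbiPhaseGradient A B x y) := by
  have hCy : C.mulVec y ⬝ᵥ y = D.mulVec (B.mulVec y) ⬝ᵥ B.mulVec y := by
    rw [← hC, ← mulVec_mulVec, ← mulVec_mulVec, mulVec_transpose, ← dotProduct_mulVec]
  have hDsymm : D.mulVec (B.mulVec y) ⬝ᵥ A.mulVec x = D.mulVec (A.mulVec x) ⬝ᵥ B.mulVec y := by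
    rw [dotProduct_comm, dotProduct_mulVec, ← mulVec_transpose, hD.eq]
  simp only [fbiPhase, fbiSymbol, fbiPhaseGradient, hCy, mulVec_add, add_dotProduct,
    dotProduct_add, sub_dotProduct, hDsymm]
  rw [dotProduct_comm x (A.mulVec x), dotProduct_comm x (B.mulVec y)]
  ring

theorem fbiPhase_add_smul {A : Matrix ι ι ℂ} (hA : A.IsSymm) (B C : Matrix ι ι ℂ)
    (x y v : ι → ℂ) (t : ℂ) :
    fbiPhase A B C (x + t • v) y = fbiPhase A B C x y + t * (fbiPhaseGradient A B x y ⬝ᵥ v)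
      + t ^ 2 * ((1 / 2) * (A.mulVec v ⬝ᵥ v)) := by
  have hAsymm : A.mulVec v ⬝ᵥ x = A.mulVec x ⬝ᵥ v := by
    rw [dotProduct_comm, dotProduct_mulVec, ← mulVec_transpose, hA.eq]
  simp only [fbiPhase, fbiPhaseGradient, mulVec_add, mulVec_smul, add_dotProduct, dotProduct_add,
    smul_dotProduct, dotProduct_smul, smul_eq_mul, hAsymm]
  ring

theorem contDiff_fbiPhase (A B C : Matrix ι ι ℂ) {n : ℕ∞ω} :
    ContDiff ℝ n fun q : (ι → ℝ) × (ι → ℝ) ↦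
      fbiPhase A B C (complexify q.1) (complexify q.2) := by
  simp only [fbiPhase, mulVec, dotProduct]
  fun_prop

theorem differentiable_fbiPhase_left (A B C : Matrix ι ι ℂ) (y : ι → ℝ) :
    Differentiable ℝ fun x : ι → ℝ ↦ fbiPhase A B C (complexify x) (complexify y) :=
  ((contDiff_fbiPhase A B C (n := 1)).comp (f := fun x ↦ (x, y))
    (by fun_prop)).differentiable one_ne_zero

theorem differentiable_fbiPhaseGradient_left (A B : Matrix ι ι ℂ) (y : ι → ℝ) (l : ι) :
    Differentiable ℝ fun x : ι → ℝ ↦ fbiPhaseGradient A B (complexify x) (complexify y) l := by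
  simp only [fbiPhaseGradient, mulVec, dotProduct, Pi.add_apply]
  exact ContDiff.differentiable (n := 1) (by fun_prop) one_ne_zero

/-- The kernel `h^α e^{iφ(x, y)/h}` of the transform, as a function of the parameters `q = (h, x)`
and of the integration variable `y`. -/
def fbiKernel (A B C : Matrix ι ι ℂ) (α : ℝ) (q : ℝ × (ι → ℝ)) (y : ι → ℝ) : ℂ :=
  ((q.1 ^ α : ℝ) : ℂ) *
    Complex.exp (Complex.I * fbiPhase A B C (complexify q.2) (complexify y) / (q.1 : ℂ))

theorem contDiffOn_fbiKernel (A B C : Matrix ι ι ℂ) (α : ℝ) {n : ℕ∞ω} :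
    ContDiffOn ℝ n (Function.uncurry (fbiKernel A B C α)) ((Ioi 0 ×ˢ univ) ×ˢ univ) := by
  have hh : ContDiff ℝ n fun r : (ℝ × (ι → ℝ)) × (ι → ℝ) ↦ r.1.1 := by fun_prop
  have hh' : ∀ r ∈ (Ioi (0 : ℝ) ×ˢ (univ : Set (ι → ℝ))) ×ˢ (univ : Set (ι → ℝ)), r.1.1 ≠ 0 :=
    fun r hr ↦ (mem_Ioi.1 hr.1.1).ne'
  have hφ : ContDiff ℝ n fun r : (ℝ × (ι → ℝ)) × (ι → ℝ) ↦
      fbiPhase A B C (complexify r.1.2) (complexify r.2) :=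
    (contDiff_fbiPhase A B C).comp (f := fun r : (ℝ × (ι → ℝ)) × (ι → ℝ) ↦ (r.1.2, r.2))
      (by fun_prop)
  refine (Complex.ofRealCLM.contDiff.comp_contDiffOn
    (hh.contDiffOn.rpow_const_of_ne hh')).mul (ContDiffOn.cexp ?_)
  simp only [div_eq_mul_inv]
  exact (contDiff_const.mul hφ).contDiffOn.mul
    ((Complex.ofRealCLM.contDiff.comp hh).contDiffOn.inv fun r hr ↦
      Complex.ofReal_ne_zero.2 (hh' r hr))

theorem deriv_fbiKernel (A B C : Matrix ι ι ℂ) (α : ℝ) {h : ℝ} (hh : 0 < h) (x y : ι → ℝ) :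
    deriv (fun s ↦ fbiKernel A B C α (s, x) y) h =
      (α / h - Complex.I * fbiPhase A B C (complexify x) (complexify y) / (h : ℂ) ^ 2)
        * fbiKernel A B C α (h, x) y := by
  have hne : (h : ℂ) ≠ 0 := Complex.ofReal_ne_zero.2 hh.ne'
  have hpow := (Real.hasDerivAt_rpow_const (p := α) (.inl hh.ne')).ofReal_comp
  have hexp := ((Complex.ofRealCLM.hasDerivAt (x := h)).inv hne).const_mul
    (Complex.I * fbiPhase A B C (complexify x) (complexify y))
  simp only [fbiKernel, div_eq_mul_inv]
  refine (hpow.mul hexp.cexp).deriv.trans ?_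
  rw [Real.rpow_sub_one hh.ne']
  simp only [Complex.ofReal_mul, Complex.ofReal_div, Pi.inv_apply, Complex.ofRealCLM_apply,
    Complex.ofReal_one]
  field_simp
  ring

/-- The FBI-type transform `F(h, x) = h^α ∫ e^{iφ(x, y)/h} u(y) dμ(y)` with phase
`φ = fbiPhase A B C`. -/
def fbiTransform (A B C : Matrix ι ι ℂ) (α : ℝ) (μ : Measure (ι → ℝ)) (u : (ι → ℝ) → ℂ)
    (h : ℝ) (x : ι → ℝ) : ℂ :=
  ((h ^ α : ℝ) : ℂ) *
    ∫ y, Complex.exp (Complex.I * fbiPhase A B C (complexify x) (complexify y) / (h : ℂ)) * u y ∂μ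

theorem fbiTransform_eq_integral (A B C : Matrix ι ι ℂ) (α : ℝ) (μ : Measure (ι → ℝ))
    (u : (ι → ℝ) → ℂ) :
    fbiTransform A B C α μ u = fun h x ↦ ∫ y, fbiKernel A B C α (h, x) y * u y ∂μ := by
  funext h x
  simp only [fbiTransform, fbiKernel, mul_assoc, integral_const_mul]

theorem contDiffOn_fbiTransform (A B C : Matrix ι ι ℂ) (α : ℝ) {μ : Measure (ι → ℝ)}
    {u : (ι → ℝ) → ℂ} (hcs : HasCompactSupport u) (hu : Integrable u μ) :
    ContDiffOn ℝ ∞ (fun q : ℝ × (ι → ℝ) ↦ fbiTransform A B C α μ u q.1 q.2)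
      (Ioi 0 ×ˢ univ) := by
  simp only [fbiTransform_eq_integral]
  exact contDiffOn_integral_mul hcs hu (isOpen_Ioi.prod isOpen_univ)
    (contDiffOn_fbiKernel A B C α)

variable [DecidableEq ι]

theorem contDiffOn_partialDeriv {Y : Type*} [NormedAddCommGroup Y] [NormedSpace ℝ Y]
    {K : (ι → ℝ) → Y → ℂ} {m n : ℕ∞ω}
    (hK : ContDiffOn ℝ n (Function.uncurry K) (univ ×ˢ univ)) (hmn : m + 1 ≤ n) (j : ι) :
    ContDiffOn ℝ m (Function.uncurry fun x y ↦ partialDeriv (K · y) j x) (univ ×ˢ univ) :=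
  (contDiffOn_fderiv_left isOpen_univ hK hmn).clm_apply contDiffOn_const

theorem partialDeriv_fbiPhase {A : Matrix ι ι ℂ} (hA : A.IsSymm) (B C : Matrix ι ι ℂ)
    (x y : ι → ℝ) (j : ι) :
    partialDeriv (fun x ↦ fbiPhase A B C (complexify x) (complexify y)) j x =
      fbiPhaseGradient A B (complexify x) (complexify y) j := by
  refine partialDeriv_eq_of_quadratic_along (a := fbiPhase A B C (complexify x) (complexify y))
    (c := 1 / 2 * A j j) (differentiable_fbiPhase_left A B C y x) fun t ↦ ?_
  simp only [complexify_add_smul, complexify_single, fbiPhase_add_smul hA, Complex.ofReal_one,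
    dotProduct_single_one, mulVec_single_one, col_apply]

theorem partialDeriv_fbiPhaseGradient (A B : Matrix ι ι ℂ) (x y : ι → ℝ) (j l : ι) :
    partialDeriv (fun x ↦ fbiPhaseGradient A B (complexify x) (complexify y) l) j x = A l j := by
  refine partialDeriv_eq_of_quadratic_along (c := 0)
    (a := fbiPhaseGradient A B (complexify x) (complexify y) l)
    (differentiable_fbiPhaseGradient_left A B y l x) fun t ↦ ?_
  simp only [complexify_add_smul, complexify_single, Complex.ofReal_one, fbiPhaseGradient,
    mulVec_add, mulVec_smul, mulVec_single_one, Pi.add_apply, Pi.smul_apply, col_apply,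
    smul_eq_mul]
  ring

theorem partialDeriv_fbiKernel {A : Matrix ι ι ℂ} (hA : A.IsSymm) (B C : Matrix ι ι ℂ) (α h : ℝ)
    (x y : ι → ℝ) (j : ι) :
    partialDeriv (fun x ↦ fbiKernel A B C α (h, x) y) j x =
      Complex.I / h * (fbiPhaseGradient A B (complexify x) (complexify y) j
        * fbiKernel A B C α (h, x) y) := by
  have hφ := differentiable_fbiPhase_left A B C y x
  have hexp := (((hφ.hasFDerivAt.const_mul Complex.I).mul_const (h : ℂ)⁻¹).cexp.const_mul
    ((h ^ α : ℝ) : ℂ)).fderiv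
  rw [← partialDeriv_fbiPhase hA B C]
  simp only [partialDeriv, fbiKernel, div_eq_mul_inv, hexp, _root_.smul_apply, smul_eq_mul]
  ring

theorem partialDeriv_partialDeriv_fbiKernel {A : Matrix ι ι ℂ} (hA : A.IsSymm)
    (B C : Matrix ι ι ℂ) (α : ℝ) {h : ℝ} (hh : 0 < h) (x y : ι → ℝ) (j l : ι) :
    partialDeriv (partialDeriv (fun x ↦ fbiKernel A B C α (h, x) y) l) j x =
      (Complex.I / h * A l j - 1 / (h : ℂ) ^ 2
        * (fbiPhaseGradient A B (complexify x) (complexify y) l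
          * fbiPhaseGradient A B (complexify x) (complexify y) j))
        * fbiKernel A B C α (h, x) y := by
  have hξ := differentiable_fbiPhaseGradient_left A B y l x
  have hK : DifferentiableAt ℝ (fun x ↦ fbiKernel A B C α (h, x) y) x :=
    differentiableAt_left_of_contDiffOn isOpen_univ
      (contDiffOn_slice_right hh (contDiffOn_fbiKernel A B C α)) (mem_univ x) y
  rw [funext (partialDeriv_fbiKernel hA B C α h · y l), partialDeriv_const_mul _ (hξ.fun_mul hK),
    partialDeriv_mul hξ hK, partialDeriv_fbiPhaseGradient, partialDeriv_fbiKernel hA]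
  linear_combination (fbiPhaseGradient A B (complexify x) (complexify y) l
    * fbiPhaseGradient A B (complexify x) (complexify y) j * fbiKernel A B C α (h, x) y
    / (h : ℂ) ^ 2) * Complex.I_sq

/-- The operator `hD_h + (1/h) P_α` acting on functions of `(h, x)`, where `D_h = -i∂_h` and `P_α`
is the left quantization of `fbiSymbol A D` plus the zeroth-order term `ih(α + (1/2) tr(AD))`. -/
def fbiOperator (A D : Matrix ι ι ℂ) (α : ℝ) (F : ℝ → (ι → ℝ) → ℂ) (h : ℝ) (x : ι → ℝ) : ℂ :=
  ((h : ℂ) / Complex.I) * deriv (fun s : ℝ ↦ F s x) h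
    + (1 / (h : ℂ)) *
        ((-(1 / 2) * (A.mulVec (complexify x) ⬝ᵥ complexify x)
            + (1 / 2) * (D.mulVec (A.mulVec (complexify x)) ⬝ᵥ A.mulVec (complexify x))) * F h x
          + (∑ j, ((x j : ℂ) - D.mulVec (A.mulVec (complexify x)) j) *
              ((h : ℂ) / Complex.I) * partialDeriv (F h) j x)
          - ((h : ℂ) ^ 2 / 2) * ∑ j, ∑ l, D j l * partialDeriv (partialDeriv (F h) l) j x)
    + Complex.I * ((α : ℂ) + (1 / 2) * (A * D).trace) * F h x

theorem fbiOperator_fbiKernel {A B C D : Matrix ι ι ℂ} (hA : A.IsSymm) (hD : D.IsSymm)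
    (hC : Bᵀ * D * B = C) (α : ℝ) {h : ℝ} (hh : 0 < h) (x y : ι → ℝ) :
    fbiOperator A D α (fun h x ↦ fbiKernel A B C α (h, x) y) h x = 0 := by
  have hne : (h : ℂ) ≠ 0 := Complex.ofReal_ne_zero.2 hh.ne'
  set ξ := fbiPhaseGradient A B (complexify x) (complexify y) with hξ
  set k := fbiKernel A B C α (h, x) y with hk
  have hfirst : ∑ j, ((x j : ℂ) - D.mulVec (A.mulVec (complexify x)) j) * ((h : ℂ) / Complex.I) *
      partialDeriv (fun x ↦ fbiKernel A B C α (h, x) y) j x =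
        ((complexify x - D.mulVec (A.mulVec (complexify x))) ⬝ᵥ ξ) * k := by
    simp only [partialDeriv_fbiKernel hA, dotProduct, Finset.sum_mul]
    refine Finset.sum_congr rfl fun j _ ↦ ?_
    simp only [Pi.sub_apply, complexify, ← hξ, ← hk]
    field_simp
  have hsecond : ∑ j, ∑ l, D j l *
      partialDeriv (partialDeriv (fun x ↦ fbiKernel A B C α (h, x) y) l) j x =
        (Complex.I / h * (A * D).trace - 1 / (h : ℂ) ^ 2 * (D.mulVec ξ ⬝ᵥ ξ)) * k := by
    rw [trace_mul_comm]
    simp only [partialDeriv_partialDeriv_fbiKernel hA B C α hh, trace, diag_apply, mul_apply,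
      mulVec, dotProduct, Finset.mul_sum, Finset.sum_mul, ← Finset.sum_sub_distrib]
    refine Finset.sum_congr rfl fun j _ ↦ Finset.sum_congr rfl fun l _ ↦ ?_
    ring
  have heikonal := fbiPhase_eq_fbiSymbol (A := A) hD hC (complexify x) (complexify y)
  rw [fbiSymbol, ← hξ] at heikonal
  rw [fbiOperator, deriv_fbiKernel A B C α hh, hfirst, hsecond, heikonal, ← hk, Complex.div_I]
  field_simp
  ring_nf
  simp only [Complex.I_sq]
  ring

variable {Y : Type*} [NormedAddCommGroup Y] [NormedSpace ℝ Y] [SecondCountableTopology Y]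
  [MeasurableSpace Y] [OpensMeasurableSpace Y] {μ : Measure Y} {u : Y → ℂ}

theorem partialDeriv_integral_mul {K : (ι → ℝ) → Y → ℂ} (hcs : HasCompactSupport u)
    (hu : Integrable u μ) (hK : ContDiffOn ℝ 1 (Function.uncurry K) (univ ×ˢ univ)) (j : ι) :
    partialDeriv (fun x ↦ ∫ y, K x y * u y ∂μ) j =
      fun x ↦ ∫ y, partialDeriv (K · y) j x * u y ∂μ :=
  funext fun x ↦ fderiv_integral_mul_apply hcs hu isOpen_univ hK (mem_univ x) _

theorem fbiOperator_integral_mul (A D : Matrix ι ι ℂ) (α : ℝ) {K : ℝ × (ι → ℝ) → Y → ℂ}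
    (hcs : HasCompactSupport u) (hu : Integrable u μ)
    (hK : ContDiffOn ℝ 2 (Function.uncurry K) ((Ioi 0 ×ˢ univ) ×ˢ univ)) {h : ℝ} (hh : 0 < h)
    (x : ι → ℝ) :
    fbiOperator A D α (fun h x ↦ ∫ y, K (h, x) y * u y ∂μ) h x =
      ∫ y, fbiOperator A D α (fun h x ↦ K (h, x) y) h x * u y ∂μ := by
  have hKx : ContDiffOn ℝ 2 (Function.uncurry fun x ↦ K (h, x)) (univ ×ˢ univ) :=
    contDiffOn_slice_right hh hK
  have hKh : ContDiffOn ℝ 2 (Function.uncurry fun s ↦ K (s, x)) (Ioi 0 ×ˢ univ) :=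
    contDiffOn_slice_left (mem_univ x) hK
  have hpd (l : ι) := contDiffOn_partialDeriv hKx one_add_one_eq_two.le l
  have hint {K' : (ι → ℝ) → Y → ℂ}
      (hK' : ContinuousOn (Function.uncurry K') (univ ×ˢ univ)) :
      Integrable (fun y ↦ K' x y * u y) μ :=
    integrable_mul_of_hasCompactSupport hcs hu (continuous_right_of_continuousOn hK' (mem_univ x))
  have hint_K := hint hKx.continuousOn
  have hint_pd (l : ι) := hint (hpd l).continuousOn
  have hint_pd_pd (j l : ι) :=
    hint (contDiffOn_partialDeriv (m := 0) (hpd l) (zero_add 1).le j).continuousOn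
  have hint_deriv : Integrable (fun y ↦ deriv (fun s ↦ K (s, x) y) h * u y) μ :=
    integrable_mul_of_hasCompactSupport hcs hu <| continuous_right_of_continuousOn
      (contDiffOn_deriv_left isOpen_Ioi hKh one_add_one_eq_two.le).continuousOn hh
  simp only [fbiOperator, deriv_integral_mul hcs hu isOpen_Ioi (hKh.of_le one_le_two) hh,
    partialDeriv_integral_mul hcs hu (hKx.of_le one_le_two),
    partialDeriv_integral_mul hcs hu (hpd _), add_mul, sub_mul, mul_add, mul_sub, mul_assoc,
    Finset.sum_mul, Finset.mul_sum]
  simp (disch := fun_prop) only [integral_add, integral_sub, integral_finsetSum,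
    integral_const_mul]

theorem fbiOperator_fbiTransform {A B C D : Matrix ι ι ℂ} (hA : A.IsSymm) (hD : D.IsSymm)
    (hC : Bᵀ * D * B = C) (α : ℝ) {μ : Measure (ι → ℝ)} {u : (ι → ℝ) → ℂ}
    (hcs : HasCompactSupport u) (hu : Integrable u μ) {h : ℝ} (hh : 0 < h) (x : ι → ℝ) :
    fbiOperator A D α (fbiTransform A B C α μ u) h x = 0 := by
  rw [fbiTransform_eq_integral,
    fbiOperator_integral_mul A D α hcs hu (contDiffOn_fbiKernel A B C α) hh x]
  simp only [fbiOperator_fbiKernel hA hD hC α hh, zero_mul, integral_zero]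

theorem stmt_12_general {A B C D : Matrix ι ι ℂ} (hA : A.IsSymm) (hD : D.IsSymm)
    (hC : Bᵀ * D * B = C) (α : ℝ) {μ : Measure (ι → ℝ)} {u : (ι → ℝ) → ℂ}
    (hcs : HasCompactSupport u) (hu : Integrable u μ) :
    ContDiffOn ℝ ∞ (fun q : ℝ × (ι → ℝ) ↦ fbiTransform A B C α μ u q.1 q.2) (Ioi 0 ×ˢ univ) ∧
      ∀ h : ℝ, 0 < h → ∀ x, fbiOperator A D α (fbiTransform A B C α μ u) h x = 0 :=
  ⟨contDiffOn_fbiTransform A B C α hcs hu,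
    fun _ hh ↦ fbiOperator_fbiTransform hA hD hC α hcs hu hh⟩

end FBI

/-- With `φ`, `D` as in Statement 10, `α ∈ ℝ` and `u` continuous
with compact support, the FBI-type transform
`F(h,x) = h^α ∫_{ℝⁿ} e^{iφ(x,y)/h} u(y) dy` is smooth on `(0,∞) × ℝⁿ` and satisfies
`(hD_h + (1/h) P_α) F = 0`, `P_α = p(x,hD_x) + ih(α + (1/2) tr(AD))`, that is:
`(h/i)∂_h F + (1/h)[(-(1/2)⟨Ax,x⟩+(1/2)⟨DAx,Ax⟩)F + ∑_j (x-DAx)_j (h/i)∂_{x_j}F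
 - (h²/2)∑_{j,l} D_{jl}∂_{x_j}∂_{x_l}F] + i(α + (1/2)tr(AD))F = 0`. -/
theorem stmt_12 (n : ℕ) (hn : 1 ≤ n) (A B C : Matrix (Fin n) (Fin n) ℂ)
    (hA : A.IsSymm) (hC : C.IsSymm) (hB : IsUnit B.det) (α : ℝ)
    (u : (Fin n → ℝ) → ℂ) (hu : Continuous u) (hcs : HasCompactSupport u) :
    let D := Bᵀ⁻¹ * C * B⁻¹
    let φ : (Fin n → ℂ) → (Fin n → ℂ) → ℂ := fun x y =>
      (1 / 2) * (A.mulVec x ⬝ᵥ x) + (B.mulVec y ⬝ᵥ x) + (1 / 2) * (C.mulVec y ⬝ᵥ y)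
    let F : ℝ → (Fin n → ℝ) → ℂ := fun h x =>
      ((h ^ α : ℝ) : ℂ) *
        ∫ y : Fin n → ℝ,
          Complex.exp (Complex.I * φ (fun j => (x j : ℂ)) (fun j => (y j : ℂ)) / (h : ℂ)) * u y
    let pd : ((Fin n → ℝ) → ℂ) → Fin n → (Fin n → ℝ) → ℂ :=
      fun f j x => fderiv ℝ f x (Pi.single j 1)
    ContDiffOn ℝ (⊤ : ℕ∞) (fun q : ℝ × (Fin n → ℝ) => F q.1 q.2) (Set.Ioi (0 : ℝ) ×ˢ Set.univ) ∧
    ∀ h : ℝ, 0 < h → ∀ x : Fin n → ℝ,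
      ((h : ℂ) / Complex.I) * deriv (fun s : ℝ => F s x) h
        + (1 / (h : ℂ)) *
            ((-(1 / 2) * (A.mulVec (fun j => (x j : ℂ)) ⬝ᵥ fun j => (x j : ℂ))
                + (1 / 2) * (D.mulVec (A.mulVec fun j => (x j : ℂ)) ⬝ᵥ
                    A.mulVec fun j => (x j : ℂ))) * F h x
              + (∑ j, ((x j : ℂ) - D.mulVec (A.mulVec fun i => (x i : ℂ)) j) *
                  ((h : ℂ) / Complex.I) * pd (F h) j x)
              - ((h : ℂ) ^ 2 / 2) * ∑ j, ∑ l, D j l * pd (fun x' => pd (F h) l x') j x)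
        + Complex.I * ((α : ℂ) + (1 / 2) * (A * D).trace) * F h x = 0 := by
  exact stmt_12_general hA (isSymm_transpose_inv_mul_mul_inv hC)
    (transpose_mul_transpose_inv_mul_mul_inv_mul hB) α hcs (hu.integrable_of_hasCompactSupport hcs)
end
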